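/- For every integer k ≥ 2 and every real 0 < δ ≤ 1 there exists a real θ > 0 (depending only on k and δ) with the following property. Let L be an infinite subset of ℕ and A ⊆ [k]^{<ℕ} with dens_{[k]^ℓ}(A) ≥ δ for every ℓ ∈ L. Then for every variable word p over k there exist a word c over k, a variable word w over k having p as an initial segment, and an infinite subset L′ of L such that: (i) the set V = {c} ∪ {c⌢w(a) : a ∈ [k]} is contained in ⋃_{ℓ∈L₀} A ∩ [k]^ℓ, where L₀ = { ℓ ∈ L : ℓ < min(L′) }; and (ii) setting V(1) = {c⌢w(a) : a ∈ [k]} and ℓ₁ the unique integer with V(1) ⊆ [k]^{ℓ₁}, for every ℓ ∈ L′ we have dens_{[k]^{ℓ−ℓ₁}}( { s ∈ [k]^{<ℕ} : t⌢s ∈ A for every t ∈ V(1) } ) ≥ θ. -/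

import Mathlib

/-- A word over `k`: a finite sequence with values in `[k]`. -/
abbrev Word (k : ℕ) := List (Fin k)

/-- A "possibly variable" letter sequence: `none` plays the role of the variable `v`. -/
abbrev VWord (k : ℕ) := List (Option (Fin k))

/-- Substitution of the letter `a` for every occurrence of the variable. -/
def subst {k : ℕ} (w : VWord k) (a : Fin k) : Word k := w.map (fun o => o.getD a)

/-- `w` is a variable word: the variable `v` occurs in it. -/
def IsVar {k : ℕ} (w : VWord k) : Prop := none ∈ w

/-- The density `dens_{[k]^n}(A) = |A ∩ [k]^n| / k^n`. -/
noncomputable def dens (k n : ℕ) (A : Set (Word k)) : ℝ :=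
  (Set.ncard {x ∈ A | x.length = n} : ℝ) / (k : ℝ) ^ n

/-!
The density Carlson–Simpson theorem is proved for *random* sets of words, by induction on the
alphabet. A random set over `Option α` without lines misses every point that completes a line whose
points with letters in `α` lie in the set. By induction such completing points have positive
density, so the set is denser on their complement, which is partitioned into intersections of sets
insensitive to exchanging the letter `none` with some letter of `α`. Insensitive sets contain large
subspaces, so a density increment results, and it can be repeated only boundedly often.

Given `A` and `L`, a second moment argument along an ultrafilter on `L` finds infinitely many levels
`t` which correlate with almost every level `l`: the average over words of length `t` in `A` of the
density of their extensions to `A ∩ [k]^l` is at least `δ² / 2`. Interleave the letters of a short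
word `x` with random blocks and copies of `p`. An energy increment selects block lengths for which
inserting the copies of `p` hardly changes these averages, so the resulting random set of words `x`
still has density at least `δ² / 4`, whatever `p` is. Counting its lines yields lines of pattern `p`
with common extensions of density at least `θ`, where `θ` depends only on `k` and `δ`. For fixed `p`
only finitely many lines can occur, and the ultrafilter chooses one serving infinitely many levels.
-/

namespace CarlsonSimpson

open Finset

open Classical in
/-- The Iverson bracket `𝟙[P]`, the indicator of a proposition; averaging it gives densities. -/
noncomputable def iverson (P : Prop) : ℝ := if P then 1 else 0

local notation "𝟙[" P "]" => iverson P

section Iverson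

variable {P Q : Prop}

lemma iverson_of (h : P) : 𝟙[P] = 1 := if_pos h

lemma iverson_of_not (h : ¬P) : 𝟙[P] = 0 := if_neg h

lemma iverson_nonneg (P : Prop) : 0 ≤ 𝟙[P] := by
  by_cases h : P <;> simp [iverson, h]

lemma iverson_le_one (P : Prop) : 𝟙[P] ≤ 1 := by
  by_cases h : P <;> simp [iverson, h]

lemma iverson_mono (h : P → Q) : 𝟙[P] ≤ 𝟙[Q] := by
  by_cases hP : P
  · rw [iverson_of hP, iverson_of (h hP)]
  · exact iverson_of_not hP ▸ iverson_nonneg Q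

lemma iverson_and (P Q : Prop) : 𝟙[P ∧ Q] = 𝟙[P] * 𝟙[Q] := by
  by_cases hP : P <;> by_cases hQ : Q <;> simp [iverson, hP, hQ]

lemma iverson_not (P : Prop) : 𝟙[¬P] = 1 - 𝟙[P] := by
  by_cases hP : P <;> simp [iverson, hP]

lemma of_iverson_pos (h : 0 < 𝟙[P]) : P :=
  of_not_not fun hP ↦ h.ne' (iverson_of_not hP)

end Iverson

/-! ### Carlson–Simpson embeddings -/

/-- Substitution of the letter `a` for the variable `none` of a variable word, over an arbitrary
alphabet. -/
abbrev plug {α : Type} (a : α) (w : List (Option α)) : List α := w.map (·.getD a)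

@[simp] lemma plug_map_some {α : Type} (a : α) (c : List α) : plug a (c.map some) = c := by
  simp [plug]

@[simp] lemma elim_comp_some {α γ : Type} (a : γ) (f : α → γ) :
    (fun o : Option α ↦ o.elim a f) ∘ some = f := rfl

lemma elim_id_eq_getD {α : Type} (a : α) : (fun o : Option α ↦ o.elim a id) = (·.getD a) := by
  funext o; cases o <;> rfl

/-- A Carlson–Simpson embedding with constants from `β`: a map `List β → List β` which inserts
constants and repetitions of earlier letters, so that `x ++ a :: y` goes to an extension of the
image of `x` followed by `a`. Being given by a scheme that does not look at the letters, it acts on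
words over any alphabet `γ` in which the constants are interpreted by a map `ι : β → γ`; this makes
it act on variable words as well. -/
@[ext] structure CSEmb (β : Type) where
  eval : ∀ {γ : Type}, (β → γ) → List γ → List γ
  map_eval : ∀ {γ γ' : Type} (ι : β → γ) (f : γ → γ') (x : List γ),
    (eval ι x).map f = eval (f ∘ ι) (x.map f)
  eval_append_cons : ∀ {γ : Type} (ι : β → γ) (x : List γ) (a : γ) (y : List γ),
    ∃ z, eval ι (x ++ a :: y) = eval ι x ++ a :: z

namespace CSEmb

variable {α β : Type}

/-- The embedding fixing every word. -/
@[simps] protected def id : CSEmb β where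
  eval _ x := x
  map_eval _ _ _ := rfl
  eval_append_cons _ _ _ y := ⟨y, rfl⟩

/-- Composition of embeddings: `ψ` acts first. -/
@[simps] def comp (φ ψ : CSEmb β) : CSEmb β where
  eval ι x := φ.eval ι (ψ.eval ι x)
  map_eval ι f x := by rw [φ.map_eval, ψ.map_eval]
  eval_append_cons ι x a y := by
    obtain ⟨z, hz⟩ := ψ.eval_append_cons ι x a y
    exact hz ▸ φ.eval_append_cons ι _ a z

/-- The embedding putting the constant word `g` in front of every word. -/
@[simps] def prepend (g : List β) : CSEmb β where
  eval ι x := g.map ι ++ x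
  map_eval ι f x := by simp
  eval_append_cons ι x a y := ⟨y, by simp⟩

/-- The embedding `φ` with its constants renamed along `f`. -/
@[simps] def relabel (f : α → β) (φ : CSEmb α) : CSEmb β where
  eval ι := φ.eval (ι ∘ f)
  map_eval ι g := φ.map_eval (ι ∘ f) g
  eval_append_cons ι := φ.eval_append_cons (ι ∘ f)

/-- The embedding `a :: y ↦ g ++ a :: φ y`, where the extra constant `none` available to `φ`
stands for the first letter `a`, so that `φ` can repeat it. -/
@[simps] def branch (g : List β) (φ : CSEmb (Option β)) : CSEmb β where
  eval ι
    | [] => g.map ι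
    | a :: y => g.map ι ++ a :: φ.eval (·.elim a ι) y
  map_eval ι f x := by
    cases x with
    | nil => simp
    | cons a y =>
      have h : f ∘ (fun o : Option β ↦ o.elim a ι) = (·.elim (f a) (f ∘ ι)) := by
        funext o; cases o <;> rfl
      simp [φ.map_eval, h]
  eval_append_cons ι x a y := by
    cases x with
    | nil => exact ⟨_, rfl⟩
    | cons b x =>
      obtain ⟨z, hz⟩ := φ.eval_append_cons (·.elim b ι) x a y
      exact ⟨z, by simp [hz]⟩

/-- `φ` maps words shorter than `n` to words shorter than `N`. -/
def LengthBound (φ : CSEmb β) (n N : ℕ) : Prop :=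
  ∀ ⦃γ : Type⦄ (ι : β → γ) (x : List γ), x.length < n → (φ.eval ι x).length < N

namespace LengthBound

variable {φ ψ : CSEmb β} {n n' M N N' : ℕ}

lemma mono (h : φ.LengthBound n N) (hn : n' ≤ n) (hN : N ≤ N') : φ.LengthBound n' N' :=
  fun _ ι x hx ↦ (h ι x (hx.trans_le hn)).trans_le hN

protected lemma id (n : ℕ) : (CSEmb.id : CSEmb β).LengthBound n n := fun _ _ _ h ↦ h

protected lemma comp (hφ : φ.LengthBound M N) (hψ : ψ.LengthBound n M) :
    (φ.comp ψ).LengthBound n N :=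
  fun _ ι x hx ↦ hφ ι _ (hψ ι x hx)

protected lemma prepend (g : List β) (n : ℕ) : (prepend g).LengthBound n (g.length + n) :=
  fun _ ι x hx ↦ by simpa using hx

protected lemma relabel (f : β → α) (h : φ.LengthBound n N) : (φ.relabel f).LengthBound n N :=
  fun _ ι x hx ↦ h (ι ∘ f) x hx

protected lemma branch (g : List β) {φ : CSEmb (Option β)} (h : φ.LengthBound n N) :
    (branch g φ).LengthBound (n + 1) (g.length + 1 + N) := by
  rintro γ ι (_ | ⟨a, y⟩) hx
  · simp only [branch_eval, List.length_map]
    omega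
  · have hy := h (·.elim a ι) y (by simpa using hx)
    simp only [branch_eval, List.length_append, List.length_map, List.length_cons]
    omega

end LengthBound

end CSEmb

/-- The stem `c` of the variable word `c ++ none :: u`: the letters before the first variable. It
is the lowest point of the Carlson–Simpson line determined by a variable word. -/
def stem {α : Type} : List (Option α) → List α
  | some a :: w => a :: stem w
  | _ => []

/-- The Carlson–Simpson line of the variable word `w` lies in `S`. -/
def LineIn {α : Type} (w : List (Option α)) (S : Set (List α)) : Prop :=
  stem w ∈ S ∧ ∀ a, plug a w ∈ S

/-- `S` contains a Carlson–Simpson line whose variable word is shorter than `N`. -/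
def HasLine {α : Type} (S : Set (List α)) (N : ℕ) : Prop :=
  ∃ w : List (Option α), none ∈ w ∧ w.length < N ∧ LineIn w S

section Lines

variable {α β : Type} {S : Set (List α)} {N N' : ℕ}

lemma HasLine.mono (h : HasLine S N) (hN : N ≤ N') : HasLine S N' :=
  h.imp fun _ ⟨hvar, hlen, hw⟩ ↦ ⟨hvar, hlen.trans_le hN, hw⟩

lemma stem_map_some_append_none (c : List α) (u : List (Option α)) :
    stem (c.map some ++ none :: u) = c := by
  induction c with
  | nil => rfl
  | cons a c ih => simp [stem, ih]

lemma exists_eq_map_some_append_none {w : List (Option α)} (h : none ∈ w) :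
    ∃ (c : List α) (u : List (Option α)), w = c.map some ++ none :: u := by
  induction w with
  | nil => simp at h
  | cons o w ih =>
    cases o with
    | none => exact ⟨[], w, rfl⟩
    | some a =>
      obtain ⟨c, u, rfl⟩ := ih (by simpa using h)
      exact ⟨a :: c, u, rfl⟩

lemma lineIn_map_some_append_none {c : List α} {u : List (Option α)} :
    LineIn (c.map some ++ none :: u) S ↔ c ∈ S ∧ ∀ a, c ++ a :: plug a u ∈ S := by
  simp [LineIn, stem_map_some_append_none, plug]

lemma lineIn_map_equiv (e : α ≃ β) {S : Set (List β)} {w : List (Option α)} (hw : none ∈ w) :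
    LineIn (w.map (Option.map e)) S ↔ LineIn w {x | x.map e ∈ S} := by
  obtain ⟨c, u, rfl⟩ := exists_eq_map_some_append_none hw
  have key : (c.map some ++ none :: u).map (Option.map e) =
      (c.map e).map some ++ none :: u.map (Option.map e) := by simp [Function.comp_def]
  have plug_eq (a : α) : plug (e a) (u.map (Option.map e)) = (plug a u).map e := by
    simp only [plug, List.map_map, Function.comp_def, Option.getD_map]
  rw [key, lineIn_map_some_append_none, lineIn_map_some_append_none, ← e.forall_congr_right]
  simp [plug_eq]

namespace CSEmb

variable (φ : CSEmb α)

lemma plug_eval (w : List (Option α)) (a : α) : plug a (φ.eval some w) = φ.eval id (plug a w) :=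
  φ.map_eval some (·.getD a) w

lemma eval_some_map_some_append_none (c : List α) (u : List (Option α)) :
    ∃ z, φ.eval some (c.map some ++ none :: u) = (φ.eval id c).map some ++ none :: z :=
  φ.map_eval id some c ▸ φ.eval_append_cons some (c.map some) none u

variable {φ}

lemma none_mem_eval {w : List (Option α)} (h : none ∈ w) : none ∈ φ.eval some w := by
  obtain ⟨c, u, rfl⟩ := exists_eq_map_some_append_none h
  obtain ⟨z, hz⟩ := φ.eval_some_map_some_append_none c u
  simp [hz]

lemma lineIn_eval_iff {w : List (Option α)} (h : none ∈ w) :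
    LineIn (φ.eval some w) S ↔ LineIn w {x | φ.eval id x ∈ S} := by
  obtain ⟨c, u, rfl⟩ := exists_eq_map_some_append_none h
  obtain ⟨z, hz⟩ := φ.eval_some_map_some_append_none c u
  simp only [LineIn, plug_eval, Set.mem_ofPred_eq]
  rw [hz, stem_map_some_append_none, stem_map_some_append_none]

lemma LengthBound.hasLine {n : ℕ} (hφ : φ.LengthBound n N)
    (h : HasLine {x | φ.eval id x ∈ S} n) : HasLine S N := by
  obtain ⟨w, hvar, hlen, hw⟩ := h
  exact ⟨φ.eval some w, none_mem_eval hvar, hφ some w hlen, (lineIn_eval_iff hvar).2 hw⟩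

end CSEmb

end Lines

/-! ### The density Carlson–Simpson property -/

/-- A subprobability weight on a finite type. Random sets of words are modelled as families
`X : Ω → Set (List α)` over such a weight. -/
structure IsSubprob {Ω : Type} [Fintype Ω] (p : Ω → ℝ) : Prop where
  nonneg : ∀ ω, 0 ≤ p ω
  sum_le_one : ∑ ω, p ω ≤ 1

/-- The density Carlson–Simpson property over `α` at density `δ`, for random sets: if every short
word lies in the random set `X` with probability at least `δ`, then `X` contains a short
Carlson–Simpson line with positive probability. -/
def DensityCS (α : Type) (δ : ℝ) : Prop :=
  ∃ N : ℕ, ∀ (Ω : Type) [Fintype Ω] (p : Ω → ℝ) (X : Ω → Set (List α)), IsSubprob p →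
    (∀ x : List α, x.length < N → δ ≤ ∑ ω, p ω * 𝟙[x ∈ X ω]) →
    ∃ ω, 0 < p ω ∧ HasLine (X ω) N

/-- The counting form of `DensityCS`: one fixed line of the random set `X` occurs with probability
at least `θ`. -/
def CountingCS (α : Type) (δ : ℝ) (N : ℕ) (θ : ℝ) : Prop :=
  ∀ (Ω : Type) [Fintype Ω] (p : Ω → ℝ) (X : Ω → Set (List α)), IsSubprob p →
    (∀ x : List α, x.length < N → δ ≤ ∑ ω, p ω * 𝟙[x ∈ X ω]) →
    ∃ w : List (Option α), none ∈ w ∧ w.length < N ∧ θ ≤ ∑ ω, p ω * 𝟙[LineIn w (X ω)]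

section Density

variable {Ω α β : Type} [Fintype Ω] {p : Ω → ℝ} {δ δ' : ℝ}

lemma sum_mul_iverson_le_sum (hp : ∀ ω, 0 ≤ p ω) (E : Ω → Prop) :
    ∑ ω, p ω * 𝟙[E ω] ≤ ∑ ω, p ω :=
  sum_le_sum fun ω _ ↦ mul_le_of_le_one_right (hp ω) (iverson_le_one _)

lemma IsSubprob.mul_iverson (hp : IsSubprob p) (E : Ω → Prop) :
    IsSubprob fun ω ↦ p ω * 𝟙[E ω] where
  nonneg ω := mul_nonneg (hp.nonneg ω) (iverson_nonneg _)
  sum_le_one := (sum_mul_iverson_le_sum hp.nonneg E).trans hp.sum_le_one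

lemma IsSubprob.sum_mul_le (hp : IsSubprob p) {f : Ω → ℝ} {C : ℝ} (hC : 0 ≤ C)
    (hf : ∀ ω, f ω ≤ C) : ∑ ω, p ω * f ω ≤ C :=
  calc ∑ ω, p ω * f ω ≤ ∑ ω, p ω * C :=
        sum_le_sum fun ω _ ↦ mul_le_mul_of_nonneg_left (hf ω) (hp.nonneg ω)
    _ ≤ C := by rw [← sum_mul]; exact mul_le_of_le_one_left hC hp.sum_le_one

lemma IsSubprob.sq_sum_mul_abs_le (hp : IsSubprob p) (f : Ω → ℝ) :
    (∑ ω, p ω * |f ω|) ^ 2 ≤ ∑ ω, p ω * f ω ^ 2 := by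
  have hsq (ω : Ω) : 0 ≤ p ω * f ω ^ 2 := mul_nonneg (hp.nonneg ω) (sq_nonneg _)
  refine (sum_sq_le_sum_mul_sum_of_sq_le_mul univ (fun ω _ ↦ hp.nonneg ω) (fun ω _ ↦ hsq ω)
    fun ω _ ↦ le_of_eq ?_).trans (mul_le_of_le_one_left (sum_nonneg fun ω _ ↦ hsq ω) hp.sum_le_one)
  rw [mul_pow, sq_abs]
  ring

lemma exists_of_sum_mul_iverson_pos (hp : ∀ ω, 0 ≤ p ω) {E : Ω → Prop}
    (h : 0 < ∑ ω, p ω * 𝟙[E ω]) : ∃ ω, 0 < p ω ∧ E ω := by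
  obtain ⟨ω, -, hω⟩ := exists_lt_of_sum_lt (by simpa using h : ∑ _ω : Ω, (0 : ℝ) < _)
  exact ⟨ω, pos_of_mul_pos_left hω (iverson_nonneg _),
    of_iverson_pos (pos_of_mul_pos_right hω (hp ω))⟩

lemma DensityCS.mono (h : DensityCS α δ) (hδ : δ ≤ δ') : DensityCS α δ' :=
  h.imp fun _ hN Ω _ p X hp hX ↦ hN Ω p X hp fun x hx ↦ hδ.trans (hX x hx)

lemma densityCS_of_one_lt (hδ : 1 < δ) : DensityCS α δ := by
  refine ⟨1, fun Ω _ p X hp hX ↦ absurd (hX [] (by simp)) (not_le.2 ?_)⟩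
  exact ((sum_mul_iverson_le_sum hp.nonneg _).trans hp.sum_le_one).trans_lt hδ

lemma densityCS_of_isEmpty [IsEmpty α] (hδ : 0 < δ) : DensityCS α δ := by
  refine ⟨2, fun Ω _ p X hp hX ↦ ?_⟩
  obtain ⟨ω, hpos, hω⟩ :=
    exists_of_sum_mul_iverson_pos hp.nonneg (hδ.trans_le (hX [] (by simp)))
  exact ⟨ω, hpos, [none], by simp, by simp, hω, isEmptyElim⟩

lemma DensityCS.congr (e : α ≃ β) (h : DensityCS α δ) : DensityCS β δ := by
  obtain ⟨N, hN⟩ := h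
  refine ⟨N, fun Ω _ p X hp hX ↦ ?_⟩
  obtain ⟨ω, hpos, w, hvar, hlen, hw⟩ := hN Ω p (fun ω ↦ {x | x.map e ∈ X ω}) hp
    fun x hx ↦ hX (x.map e) (by simpa using hx)
  exact ⟨ω, hpos, w.map (Option.map e), List.mem_map.2 ⟨none, hvar, rfl⟩, by simpa using hlen,
    (lineIn_map_equiv e hvar).2 hw⟩

lemma DensityCS.exists_relative (h : DensityCS α δ) :
    ∃ N : ℕ, ∀ (Ω : Type) [Fintype Ω] (p : Ω → ℝ) (X : Ω → Set (List α)),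
      (∀ ω, 0 ≤ p ω) → 0 < ∑ ω, p ω →
      (∀ x : List α, x.length < N → δ * ∑ ω, p ω ≤ ∑ ω, p ω * 𝟙[x ∈ X ω]) →
      ∃ ω, 0 < p ω ∧ HasLine (X ω) N := by
  obtain ⟨N, hN⟩ := h
  refine ⟨N, fun Ω _ p X hp hpos hX ↦ ?_⟩
  have hnorm : IsSubprob fun ω ↦ p ω / ∑ ω, p ω :=
    ⟨fun ω ↦ div_nonneg (hp ω) hpos.le, by rw [← sum_div, div_self hpos.ne']⟩
  obtain ⟨ω, hω, hline⟩ := hN Ω _ X hnorm fun x hx ↦ by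
    simpa only [div_mul_eq_mul_div, ← sum_div, le_div_iff₀ hpos] using hX x hx
  exact ⟨ω, (div_pos_iff_of_pos_right hpos).1 hω, hline⟩

lemma exists_sum_mul_iverson_hasLine_le (α : Type) [Finite α] (N : ℕ) :
    ∃ K : ℕ, ∀ (Ω : Type) [Fintype Ω] (p : Ω → ℝ) (X : Ω → Set (List α)) (θ : ℝ),
      (∀ ω, 0 ≤ p ω) →
      (∀ w, none ∈ w → w.length < N → ∑ ω, p ω * 𝟙[LineIn w (X ω)] ≤ θ) →
      ∑ ω, p ω * 𝟙[HasLine (X ω) N] ≤ K * θ := by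
  have hfin : {w : List (Option α) | none ∈ w ∧ w.length < N}.Finite :=
    (List.finite_length_lt (Option α) N).subset fun w hw ↦ hw.2
  refine ⟨#hfin.toFinset, fun Ω _ p X θ hp hθ ↦ ?_⟩
  have union_bound (ω : Ω) : 𝟙[HasLine (X ω) N] ≤ ∑ w ∈ hfin.toFinset, 𝟙[LineIn w (X ω)] := by
    by_cases h : HasLine (X ω) N
    · obtain ⟨w, hvar, hlen, hw⟩ := h
      rw [iverson_of ⟨w, hvar, hlen, hw⟩, ← iverson_of hw]
      exact single_le_sum (f := fun w ↦ 𝟙[LineIn w (X ω)]) (fun w _ ↦ iverson_nonneg _)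
        (hfin.mem_toFinset.2 ⟨hvar, hlen⟩)
    · exact iverson_of_not h ▸ sum_nonneg fun w _ ↦ iverson_nonneg _
  calc ∑ ω, p ω * 𝟙[HasLine (X ω) N]
      ≤ ∑ ω, ∑ w ∈ hfin.toFinset, p ω * 𝟙[LineIn w (X ω)] :=
        sum_le_sum fun ω _ ↦ by
          rw [← mul_sum]
          exact mul_le_mul_of_nonneg_left (union_bound ω) (hp ω)
    _ = ∑ w ∈ hfin.toFinset, ∑ ω, p ω * 𝟙[LineIn w (X ω)] := sum_comm
    _ ≤ #hfin.toFinset * θ := by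
        rw [← nsmul_eq_mul]
        exact sum_le_card_nsmul _ _ _ fun w hw ↦ (hfin.mem_toFinset.1 hw).elim (hθ w)

/-- If no line were likely, discarding the few `ω` for which `X ω` contains a line would cost little
density. -/
lemma DensityCS.exists_countingCS [Finite α] (h : DensityCS α δ) (hδ : 0 < δ) :
    ∃ N θ, 0 < θ ∧ CountingCS α (2 * δ) N θ := by
  obtain ⟨N, hN⟩ := h
  obtain ⟨K, hK⟩ := exists_sum_mul_iverson_hasLine_le α N
  refine ⟨N + 1, δ / (K + 1), by positivity, fun Ω _ p X hp hX ↦ ?_⟩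
  by_contra! hrare
  have hline : ∑ ω, p ω * 𝟙[HasLine (X ω) N] ≤ δ := by
    refine (hK Ω p X _ hp.nonneg fun w hvar hlen ↦ (hrare w hvar (by omega)).le).trans ?_
    rw [mul_div_assoc', div_le_iff₀ (by positivity)]
    nlinarith
  have hsplit (E : Ω → Prop) (ω : Ω) : p ω * 𝟙[E ω] ≤
      p ω * 𝟙[¬HasLine (X ω) N] * 𝟙[E ω] + p ω * 𝟙[HasLine (X ω) N] := by
    rw [iverson_not]
    nlinarith [mul_nonneg (mul_nonneg (hp.nonneg ω) (iverson_nonneg (HasLine (X ω) N)))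
      (sub_nonneg.2 (iverson_le_one (E ω)))]
  obtain ⟨ω, hpos, hω⟩ := hN Ω _ X (hp.mul_iverson fun ω ↦ ¬HasLine (X ω) N) fun x hx ↦ by
    have := (hX x (by omega)).trans (sum_le_sum fun ω _ ↦ hsplit (x ∈ X ·) ω)
    rw [sum_add_distrib] at this
    linarith
  exact of_iverson_pos (pos_of_mul_pos_right hpos (hp.nonneg ω)) hω

end Density

/-! ### Colouring theorems -/

section Colouring

variable {α β κ : Type}

lemma exists_halesJewett_words (β κ : Type) [Finite β] [Finite κ] (N : ℕ) :
    ∃ n : ℕ, ∀ χ : List β → κ, ∃ (g : List β) (post : List (Option β)),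
      g.length + 1 + post.length = n ∧ ∀ a b z, z.length < N →
        χ (g ++ a :: (plug a post ++ z)) = χ (g ++ b :: (plug b post ++ z)) := by
  have : Finite {z : List β // z.length < N} := (List.finite_length_lt β N).to_subtype
  obtain ⟨ι, _, hι⟩ := Combinatorics.Line.exists_mono_in_high_dimension β
    ({z : List β // z.length < N} → κ)
  let e := Fintype.equivFin ι
  refine ⟨Fintype.card ι, fun χ ↦ ?_⟩
  obtain ⟨l, c, hl⟩ := hι fun f z ↦ χ (List.ofFn (f ∘ e.symm) ++ z)
  obtain ⟨i, hi⟩ := l.proper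
  have hvar : none ∈ List.ofFn (l.idxFun ∘ e.symm) := List.mem_ofFn.2 ⟨e i, by simpa using hi⟩
  obtain ⟨g, post, hw⟩ := exists_eq_map_some_append_none hvar
  have plug_line (a : β) : List.ofFn (l a ∘ e.symm) = g ++ a :: plug a post := by
    have : plug a (List.ofFn (l.idxFun ∘ e.symm)) = List.ofFn (l a ∘ e.symm) := List.map_ofFn
    rw [← this, hw]
    simp [plug]
  refine ⟨g, post, ?_, fun a b z hz ↦ ?_⟩
  · have := congrArg List.length hw
    simp only [List.length_ofFn, List.length_append, List.length_map, List.length_cons] at this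
    omega
  · have := congrFun ((hl a).trans (hl b).symm) ⟨z, hz⟩
    simpa [plug_line] using this

/-- Some colour class `k` of `χ` contains the image of all words shorter than `d k` under one
embedding with images shorter than `N`. -/
def HasMonoEmb (d : κ → ℕ) (N : ℕ) (χ : List β → κ) : Prop :=
  ∃ (k : κ) (φ : CSEmb β), φ.LengthBound (d k) N ∧
    ∀ x : List β, x.length < d k → χ (φ.eval id x) = k

lemma HasMonoEmb.mono {d : κ → ℕ} {N N' : ℕ} {χ : List β → κ} (h : HasMonoEmb d N χ)
    (hN : N ≤ N') : HasMonoEmb d N' χ :=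
  let ⟨k, φ, hφ, hmono⟩ := h
  ⟨k, φ, hφ.mono le_rfl hN, hmono⟩

lemma hasMonoEmb_of_eq_zero {d : κ → ℕ} {k : κ} (hk : d k = 0) (N : ℕ) {χ : List β → κ} :
    HasMonoEmb d N χ :=
  ⟨k, .id, fun _ _ _ hx ↦ by omega, fun _ hx ↦ by omega⟩

/-- The word `g` can be put below an embedding of colour `χ g`; embeddings of other colours are
just shifted. -/
lemma HasMonoEmb.of_update [DecidableEq κ] {d : κ → ℕ} {N : ℕ} {χ : List β → κ} {g : List β}
    {post : List (Option β)} (a₀ : β)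
    (hline : ∀ a b z, z.length < N →
      χ (g ++ a :: (plug a post ++ z)) = χ (g ++ b :: (plug b post ++ z)))
    (h : HasMonoEmb (Function.update d (χ g) (d (χ g) - 1)) N
      fun z ↦ χ (g ++ a₀ :: (plug a₀ post ++ z))) :
    HasMonoEmb d (g.length + 1 + post.length + N) χ := by
  obtain ⟨k, φ, hφ, hmono⟩ := h
  rcases eq_or_ne k (χ g) with rfl | hk
  · rw [Function.update_self] at hφ hmono
    refine ⟨χ g, .branch g ((CSEmb.prepend post).comp (φ.relabel some)), ?_, ?_⟩
    · refine (((CSEmb.LengthBound.prepend post N).comp (hφ.relabel some)).branch g).mono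
        (by omega) (by omega)
    · rintro (_ | ⟨a, y⟩) hx
      · simp
      · have hy : y.length < d (χ g) - 1 := by
          simp only [List.length_cons] at hx
          omega
        simp only [CSEmb.branch_eval, CSEmb.comp_eval, CSEmb.prepend_eval, CSEmb.relabel_eval,
          List.map_id, elim_id_eq_getD]
        exact (hline a a₀ _ (hφ id y hy)).trans (hmono y hy)
  · rw [Function.update_of_ne hk] at hφ hmono
    refine ⟨k, (CSEmb.prepend (g ++ a₀ :: plug a₀ post)).comp φ, ?_, fun x hx ↦ ?_⟩
    · refine ((CSEmb.LengthBound.prepend _ N).comp hφ).mono le_rfl ?_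
      simp only [List.length_append, List.length_cons, List.length_map]
      omega
    · simpa using hmono x hx

lemma exists_hasMonoEmb [Finite β] [Nonempty β] [Finite κ] (d : κ → ℕ) :
    ∃ N : ℕ, ∀ χ : List β → κ, HasMonoEmb d N χ := by
  classical
  cases nonempty_fintype κ
  induction hm : ∑ k, d k generalizing d with
  | zero => exact ⟨0, fun χ ↦ hasMonoEmb_of_eq_zero (sum_eq_zero_iff.1 hm (χ []) (mem_univ _)) 0⟩
  | succ m ih =>
    have hdec (k₀ : κ) : ∃ N : ℕ, d k₀ ≠ 0 → ∀ χ : List β → κ,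
        HasMonoEmb (Function.update d k₀ (d k₀ - 1)) N χ := by
      by_cases hk₀ : d k₀ = 0
      · exact ⟨0, (absurd hk₀ ·)⟩
      · have hsum : ∑ k, Function.update d k₀ (d k₀ - 1) k = m := by
          have := add_sum_erase univ d (mem_univ k₀)
          rw [sum_update_of_mem (mem_univ k₀), sdiff_singleton_eq_erase]
          omega
        exact (ih _ hsum).imp fun _ hN _ ↦ hN
    choose N hN using hdec
    obtain ⟨n, hn⟩ := exists_halesJewett_words β κ (∑ k, N k)
    refine ⟨n + ∑ k, N k, fun χ ↦ ?_⟩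
    obtain ⟨g, post, rfl, hline⟩ := hn χ
    by_cases hg : d (χ g) = 0
    · exact hasMonoEmb_of_eq_zero hg _
    · exact .of_update (Classical.arbitrary β) hline <|
        (hN _ hg _).mono (single_le_sum (fun _ _ ↦ Nat.zero_le _) (mem_univ _))

/-- Colour focusing for variable words: after passing to an embedding, the colour of a short
variable word depends only on its stem. -/
lemma exists_emb_color_eq_of_stem (α : Type) [Finite α] (n : ℕ) (κ : Type) [Finite κ] :
    ∃ N : ℕ, ∀ χ : List (Option α) → κ, ∃ ψ : CSEmb α, ψ.LengthBound n N ∧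
      ∀ (c : List α) (u u' : List (Option α)),
        c.length + 1 + u.length < n → c.length + 1 + u'.length < n →
        χ (ψ.eval some (c.map some ++ none :: u)) = χ (ψ.eval some (c.map some ++ none :: u')) := by
  induction n generalizing κ with
  | zero => exact ⟨0, fun χ ↦ ⟨.id, .id 0, fun c u u' hu ↦ by omega⟩⟩
  | succ n ih =>
    have := Fintype.ofFinite κ
    obtain ⟨M, hM⟩ := ih (α → κ)
    obtain ⟨N, hN⟩ := exists_hasMonoEmb (β := Option α) (κ := κ) fun _ ↦ M
    refine ⟨1 + N, fun χ ↦ ?_⟩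
    obtain ⟨k, φ, hφ, hk⟩ := hN fun y ↦ χ (none :: y)
    obtain ⟨ψ, hψ, hcol⟩ := hM fun w a ↦ χ ((CSEmb.branch [] φ).eval some (some a :: w))
    have elim_none : (fun o : Option α ↦ o.elim none some) = id := by
      funext o; cases o <;> rfl
    refine ⟨(CSEmb.branch [] φ).comp (.branch [] (ψ.relabel some)),
      ((hφ.branch []).mono (by simp [add_comm]) (by simp)).comp ((hψ.relabel some).branch []), ?_⟩
    rintro (_ | ⟨a, c⟩) u u' hu hu'
    · simp only [List.length_nil, zero_add] at hu hu'
      have hmono (u : List (Option α)) (hu : 1 + u.length < n + 1) :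
          χ (none :: φ.eval id (ψ.eval some u)) = k := hk _ (hψ some u (by omega))
      simpa [elim_none] using (hmono u hu).trans (hmono u' hu').symm
    · simp only [List.length_cons] at hu hu'
      simpa using congrFun (hcol c u u' (by omega) (by omega)) a

end Colouring

section Subspaces

variable {α : Type} [Finite α]

/-- Whether a variable word is a likely line can be made to depend only on its stem, so that a
single likely line yields many. -/
lemma exists_forall_le_sum_lineIn (h : ∀ δ : ℝ, 0 < δ → DensityCS α δ) {δ : ℝ} (hδ : 0 < δ) :
    ∃ θ : ℝ, 0 < θ ∧ ∀ n : ℕ, ∃ N : ℕ,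
      ∀ (Ω : Type) [Fintype Ω] (p : Ω → ℝ) (X : Ω → Set (List α)), IsSubprob p →
      (∀ x : List α, x.length < N → δ ≤ ∑ ω, p ω * 𝟙[x ∈ X ω]) →
      ∃ (ψ : CSEmb α) (c : List α), ψ.LengthBound (c.length + 1 + n) N ∧
        ∀ u : List (Option α), u.length < n →
          θ ≤ ∑ ω, p ω * 𝟙[LineIn (ψ.eval some (c.map some ++ none :: u)) (X ω)] := by
  obtain ⟨J, θ, hθ, hcount⟩ := (h _ (half_pos hδ)).exists_countingCS (half_pos hδ)
  rw [mul_div_cancel₀ δ two_ne_zero] at hcount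
  refine ⟨θ, hθ, fun n ↦ ?_⟩
  obtain ⟨N, hN⟩ := exists_emb_color_eq_of_stem α (J + 1 + n) Prop
  refine ⟨N, fun Ω _ p X hp hX ↦ ?_⟩
  obtain ⟨ψ, hψ, hcol⟩ := hN fun w ↦ θ ≤ ∑ ω, p ω * 𝟙[LineIn w (X ω)]
  obtain ⟨w, hvar, hlen, hw⟩ := hcount Ω p (fun ω ↦ {x | ψ.eval id x ∈ X ω}) hp
    fun x hx ↦ hX (ψ.eval id x) (hψ id x (by omega))
  simp only [← CSEmb.lineIn_eval_iff hvar] at hw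
  obtain ⟨c, u₀, rfl⟩ := exists_eq_map_some_append_none hvar
  simp only [List.length_append, List.length_map, List.length_cons] at hlen
  exact ⟨ψ, c, hψ.mono (by omega) le_rfl, fun u hu ↦
    (hcol c u₀ u (by omega) (by omega)).mp hw⟩

lemma exists_emb_mem (h : ∀ δ : ℝ, 0 < δ → DensityCS α δ) (n : ℕ) {δ : ℝ} (hδ : 0 < δ) :
    ∃ N : ℕ, ∀ (Ω : Type) [Fintype Ω] (p : Ω → ℝ) (X : Ω → Set (List α)), IsSubprob p →
      (∀ x : List α, x.length < N → δ ≤ ∑ ω, p ω * 𝟙[x ∈ X ω]) →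
      ∃ ω, 0 < p ω ∧ ∃ ρ : CSEmb α, ρ.LengthBound (n + 1) N ∧
        ∀ x : List α, x.length < n + 1 → ρ.eval id x ∈ X ω := by
  induction n generalizing δ with
  | zero =>
    refine ⟨1, fun Ω _ p X hp hX ↦ ?_⟩
    obtain ⟨ω, hω, hmem⟩ :=
      exists_of_sum_mul_iverson_pos hp.nonneg (hδ.trans_le (hX [] (by simp)))
    exact ⟨ω, hω, .id, .id 1, fun x hx ↦ by
      simpa [List.length_eq_zero_iff.1 (Nat.lt_one_iff.1 hx)] using hmem⟩
  | succ n ih =>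
    obtain ⟨θ, hθ, hmany⟩ := exists_forall_le_sum_lineIn h hδ
    obtain ⟨M, hM⟩ := ih hθ
    obtain ⟨N, hN⟩ := hmany M
    refine ⟨N, fun Ω _ p X hp hX ↦ ?_⟩
    obtain ⟨ψ, c, hψ, hline⟩ := hN Ω p X hp hX
    obtain ⟨ω, hω, ρ, hρ, hmem⟩ := hM Ω p
      (fun ω ↦ {u | LineIn (ψ.eval some (c.map some ++ none :: u.map some)) (X ω)}) hp
      fun x hx ↦ hline (x.map some) (by simpa using hx)
    refine ⟨ω, hω, ψ.comp (.branch c (ρ.relabel some)), hψ.comp ((hρ.relabel some).branch c), ?_⟩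
    have hmem' (x : List α) (hx : x.length < n + 1) : ψ.eval id c ∈ X ω ∧
        ∀ a, ψ.eval id (c ++ a :: ρ.eval id x) ∈ X ω := by
      have := (CSEmb.lineIn_eval_iff (by simp)).1 (hmem x hx)
      simpa [lineIn_map_some_append_none] using this
    rintro (_ | ⟨a, y⟩) hx
    · simpa using (hmem' [] (by simp)).1
    · simpa using (hmem' y (by simpa using hx)).2 a

end Subspaces

/-! ### Averages over words of a given length -/

open scoped BigOperators in
/-- The average of `F` over all words of length `n`. -/
noncomputable def avg {Γ : Type} [Fintype Γ] (n : ℕ) (F : List Γ → ℝ) : ℝ :=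
  𝔼 v : Fin n → Γ, F (List.ofFn v)

section Average

variable {Γ : Type} [Fintype Γ] {n m r : ℕ} {F G : List Γ → ℝ} {B c : ℝ}

lemma avg_congr (h : ∀ z, z.length = n → F z = G z) : avg n F = avg n G :=
  expect_congr rfl fun _ _ ↦ h _ List.length_ofFn

lemma avg_mono (h : ∀ z, z.length = n → F z ≤ G z) : avg n F ≤ avg n G :=
  expect_le_expect fun _ _ ↦ h _ List.length_ofFn

lemma avg_nonneg (h : ∀ z, 0 ≤ F z) : 0 ≤ avg n F :=
  expect_nonneg fun _ _ ↦ h _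

@[simp] lemma avg_zero (F : List Γ → ℝ) : avg 0 F = F [] := by
  simp [avg]

lemma avg_append (n m : ℕ) (F : List Γ → ℝ) :
    avg (n + m) F = avg n fun c ↦ avg m fun z ↦ F (c ++ z) := by
  simp only [avg, ← List.ofFn_fin_append]
  rw [← expect_product' univ univ fun a b ↦ F (List.ofFn (Fin.append a b))]
  exact (Fintype.expect_equiv (Fin.appendEquiv n m) _ _ fun _ ↦ rfl).symm

lemma avg_sum {ι : Type*} (s : Finset ι) (F : ι → List Γ → ℝ) :
    (avg n fun z ↦ ∑ i ∈ s, F i z) = ∑ i ∈ s, avg n (F i) :=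
  expect_sum_comm _ _ _

lemma mul_avg (a : ℝ) (F : List Γ → ℝ) : a * avg n F = avg n fun z ↦ a * F z :=
  mul_expect _ _ _

lemma avg_add (F G : List Γ → ℝ) : (avg n fun z ↦ F z + G z) = avg n F + avg n G :=
  expect_add_distrib _ _ _

lemma avg_sub (F G : List Γ → ℝ) : (avg n fun z ↦ F z - G z) = avg n F - avg n G :=
  expect_sub_distrib _ _ _

lemma abs_avg_le_avg_abs : |avg n F| ≤ avg n fun z ↦ |F z| :=
  abs_expect_le _ _

lemma le_card_pow_mul_avg (hF : ∀ z, 0 ≤ F z) {z : List Γ} (hz : z.length = n) :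
    F z ≤ (Fintype.card Γ : ℝ) ^ n * avg n F := by
  subst hz
  have : F z ≤ ∑ v : Fin z.length → Γ, F (List.ofFn v) := by
    simpa using single_le_sum (f := fun v : Fin z.length → Γ ↦ F (List.ofFn v))
      (fun _ _ ↦ hF _) (mem_univ z.get)
  rwa [avg, ← Nat.cast_pow, ← Fintype.card_fin z.length, ← Fintype.card_fun,
    Fintype.card_fin, Fintype.card_mul_expect]

variable [Nonempty Γ]

@[simp] lemma avg_const (n : ℕ) (c : ℝ) : (avg n fun _ : List Γ ↦ c) = c :=
  Fintype.expect_const c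

lemma avg_take (n m : ℕ) (F : List Γ → ℝ) : (avg (n + m) fun z ↦ F (z.take n)) = avg n F := by
  rw [avg_append]
  refine avg_congr fun c hc ↦ ?_
  simp only [← hc, List.take_left, avg_const]

lemma avg_le (h : ∀ z, z.length = n → F z ≤ c) : avg n F ≤ c :=
  (avg_mono h).trans_eq (avg_const n c)

lemma exists_le_of_le_avg (h : c ≤ avg n F) : ∃ z, z.length = n ∧ c ≤ F z := by
  obtain ⟨v, -, hv⟩ := exists_le_of_le_expect univ_nonempty h
  exact ⟨_, List.length_ofFn, hv⟩

lemma abs_avg_le (h : ∀ z, |F z| ≤ B) : |avg n F| ≤ B :=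
  abs_avg_le_avg_abs.trans (avg_le fun z _ ↦ h z)

lemma sq_avg_le_avg_sq : avg n F ^ 2 ≤ avg n fun z ↦ F z ^ 2 := by
  simpa [avg] using expect_mul_sq_le_sq_mul_sq univ (fun v : Fin n → Γ ↦ F (List.ofFn v)) 1

end Average

/-! ### Energy increments -/

section Energy

variable {Γ : Type} [Fintype Γ]

/-- The conditional average of `F` over the words of length `D` beginning with `c`. -/
noncomputable def condAvg (D : ℕ) (F : List Γ → ℝ) (c : List Γ) : ℝ :=
  avg (D - c.length) fun z ↦ F (c ++ z)

/-- The mean square of the conditional averages of `F` at level `n`. -/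
noncomputable def energy (D : ℕ) (F : List Γ → ℝ) (n : ℕ) : ℝ :=
  avg n fun c ↦ condAvg D F c ^ 2

variable {D n r : ℕ} {F : List Γ → ℝ} {B : ℝ}

lemma condAvg_eq_avg {c : List Γ} (h : c.length + r ≤ D) :
    condAvg D F c = avg r fun z ↦ condAvg D F (c ++ z) := by
  rw [condAvg, show D - c.length = r + (D - c.length - r) by omega, avg_append]
  refine avg_congr fun z hz ↦ ?_
  rw [condAvg, List.length_append, hz, ← Nat.sub_sub]
  simp only [List.append_assoc]

lemma avg_condAvg (h : n ≤ D) : avg n (condAvg D F) = avg D F := by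
  have nil : condAvg D F [] = avg D F := by simp [condAvg]
  rw [← nil, condAvg_eq_avg (r := n) (by simpa using h)]
  rfl

lemma energy_nonneg : 0 ≤ energy D F n := avg_nonneg fun _ ↦ sq_nonneg _

variable [Nonempty Γ]

lemma energy_le_sq (h : ∀ z, |F z| ≤ B) : energy D F n ≤ B ^ 2 :=
  avg_le fun c _ ↦ sq_le_sq' (abs_le.1 (abs_avg_le fun z ↦ h (c ++ z))).1
    (abs_le.1 (abs_avg_le fun z ↦ h (c ++ z))).2

lemma energy_add_sub_energy (h : n + r ≤ D) :
    energy D F (n + r) - energy D F n =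
      avg n fun c ↦ avg r fun z ↦ (condAvg D F (c ++ z) - condAvg D F c) ^ 2 := by
  rw [energy, energy, avg_append, ← avg_sub]
  refine avg_congr fun c hc ↦ ?_
  have expand (z : List Γ) : (condAvg D F (c ++ z) - condAvg D F c) ^ 2 =
      condAvg D F (c ++ z) ^ 2 - 2 * condAvg D F c * condAvg D F (c ++ z) + condAvg D F c ^ 2 := by
    ring
  simp only [expand]
  rw [avg_add, avg_sub, avg_const, ← mul_avg, ← condAvg_eq_avg (hc ▸ h)]
  ring

lemma energy_mono {m : ℕ} (hnm : n ≤ m) (hm : m ≤ D) : energy D F n ≤ energy D F m := by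
  obtain ⟨r, rfl⟩ := Nat.exists_eq_add_of_le hnm
  rw [← sub_nonneg, energy_add_sub_energy hm]
  exact avg_nonneg fun _ ↦ avg_nonneg fun _ ↦ sq_nonneg _

lemma sq_avg_condAvg_append_sub_le (h : n + r ≤ D) {e : List Γ} (he : e.length = r) :
    ((avg n fun c ↦ condAvg D F (c ++ e)) - avg D F) ^ 2 ≤
      (Fintype.card Γ : ℝ) ^ r * (energy D F (n + r) - energy D F n) := by
  rw [← avg_condAvg (F := F) (show n ≤ D by omega), ← avg_sub, energy_add_sub_energy h, mul_avg]
  exact sq_avg_le_avg_sq.trans <| avg_mono fun c _ ↦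
    le_card_pow_mul_avg (F := fun z ↦ (condAvg D F (c ++ z) - condAvg D F c) ^ 2)
      (fun _ ↦ sq_nonneg _) he

variable {Ω ι : Type} [Fintype Ω] {p : Ω → ℝ}

lemma exists_sub_le_div {f : ℕ → ℝ} {T : ℕ} {K : ℝ} (hT : 0 < T) (h₀ : 0 ≤ f 0) (hK : f T ≤ K) :
    ∃ i < T, f (i + 1) - f i ≤ K / T := by
  have hsum : ∑ i ∈ range T, (f (i + 1) - f i) ≤ ∑ _i ∈ range T, K / T := by
    rw [sum_range_sub, sum_const, card_range, nsmul_eq_mul, mul_div_cancel₀ _ (by positivity)]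
    linarith
  obtain ⟨i, hi, hle⟩ := exists_le_of_sum_le (nonempty_range_iff.2 hT.ne') hsum
  exact ⟨i, mem_range.1 hi, hle⟩

lemma exists_forall_sum_energy_sub_le (hp : IsSubprob p) {W : Finset ι}
    {F : ι → Ω → List Γ → ℝ} (hF : ∀ x ω z, |F x ω z| ≤ B) {s : ℕ → ℕ} (hs : Monotone s) {T : ℕ}
    (hT : 0 < T) :
    ∃ i < T, ∀ x ∈ W, ∑ ω, p ω * (energy (s T) (F x ω) (s (i + 1)) - energy (s T) (F x ω) (s i)) ≤
      #W * B ^ 2 / T := by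
  obtain ⟨i, hi, hle⟩ := exists_sub_le_div
    (f := fun i ↦ ∑ x ∈ W, ∑ ω, p ω * energy (s T) (F x ω) (s i)) (K := #W * B ^ 2) hT
    (sum_nonneg fun x _ ↦ sum_nonneg fun ω _ ↦ mul_nonneg (hp.nonneg ω) energy_nonneg)
    (by
      simpa [nsmul_eq_mul] using sum_le_card_nsmul W _ (B ^ 2) fun x _ ↦
        hp.sum_mul_le (sq_nonneg B) fun ω ↦ energy_le_sq (hF x ω))
  refine ⟨i, hi, fun x hx ↦ le_trans ?_ hle⟩
  simp only [← sum_sub_distrib, ← mul_sub]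
  exact single_le_sum
    (f := fun x ↦
      ∑ ω, p ω * (energy (s T) (F x ω) (s (i + 1)) - energy (s T) (F x ω) (s i)))
    (fun x _ ↦ sum_nonneg fun ω _ ↦ mul_nonneg (hp.nonneg ω) <|
      sub_nonneg.2 (energy_mono (hs i.le_succ) (hs hi))) hx

/-- At one of the levels `s i`, inserting a block `e` of length `r` at that level hardly changes
the averages of the functions `F x ω`: otherwise the energy would grow beyond all bounds. -/
lemma exists_forall_sum_abs_avg_condAvg_sub_le (hp : IsSubprob p) {W : Finset ι}
    {F : ι → Ω → List Γ → ℝ} (hF : ∀ x ω z, |F x ω z| ≤ B) {s : ℕ → ℕ}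
    (hs : ∀ i, s i + r ≤ s (i + 1)) {T : ℕ} (hT : 0 < T) {ε : ℝ} (hε : 0 ≤ ε)
    (hTε : (Fintype.card Γ : ℝ) ^ r * (#W * B ^ 2) ≤ T * ε ^ 2) :
    ∃ i < T, ∀ x ∈ W, ∀ e : List Γ, e.length = r →
      ∑ ω, p ω * |(avg (s i) fun c ↦ condAvg (s T) (F x ω) (c ++ e)) - avg (s T) (F x ω)| ≤ ε := by
  have hmono : Monotone s := monotone_nat_of_le_succ fun i ↦ (Nat.le_add_right _ _).trans (hs i)
  obtain ⟨i, hi, henergy⟩ := exists_forall_sum_energy_sub_le hp (W := W) hF hmono hT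
  refine ⟨i, hi, fun x hx e he ↦ abs_le_of_sq_le_sq' ?_ hε |>.2⟩
  have hir : s i + r ≤ s T := (hs i).trans (hmono hi)
  set κ : ℝ := (Fintype.card Γ : ℝ) ^ r
  calc _ ≤ ∑ ω, p ω * ((avg (s i) fun c ↦ condAvg (s T) (F x ω) (c ++ e)) -
            avg (s T) (F x ω)) ^ 2 := hp.sq_sum_mul_abs_le _
    _ ≤ ∑ ω, p ω * (κ * (energy (s T) (F x ω) (s (i + 1)) - energy (s T) (F x ω) (s i))) := by
        refine sum_le_sum fun ω _ ↦ mul_le_mul_of_nonneg_left ?_ (hp.nonneg ω)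
        refine (sq_avg_condAvg_append_sub_le hir he).trans ?_
        gcongr
        exact energy_mono (hs i) (hmono hi)
    _ ≤ κ * (#W * B ^ 2 / T) := by
        simp only [mul_left_comm _ κ, ← mul_sum]
        exact mul_le_mul_of_nonneg_left (henergy x hx) (by positivity)
    _ ≤ ε ^ 2 := by
        rw [← mul_div_assoc, div_le_iff₀' (by positivity)]
        exact hTε

end Energy

/-! ### Random embeddings -/

section Insensitivity

namespace CSEmb

variable {α β : Type}

/-- The embedding `a :: y ↦ g ++ a :: h ++ φ y`. -/
def pad (g h : List β) (φ : CSEmb β) : CSEmb β :=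
  branch g ((prepend (h.map some)).comp (φ.relabel some))

variable (g h : List β) (φ : CSEmb β)

@[simp] lemma pad_eval_nil {γ : Type} (ι : β → γ) : (pad g h φ).eval ι [] = g.map ι := rfl

@[simp] lemma pad_eval_cons {γ : Type} (ι : β → γ) (a : γ) (y : List γ) :
    (pad g h φ).eval ι (a :: y) = g.map ι ++ a :: (h.map ι ++ φ.eval ι y) := by
  simp [pad]

lemma relabel_pad (f : β → α) :
    (pad g h φ).relabel f = pad (g.map f) (h.map f) (φ.relabel f) := by
  ext γ ι x : 4
  cases x <;> simp

protected lemma LengthBound.pad {φ : CSEmb β} {n N : ℕ} (hφ : φ.LengthBound n N) :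
    (pad g h φ).LengthBound (n + 1) (g.length + 1 + (h.length + N)) := by
  refine (((LengthBound.prepend (h.map some) N).comp (hφ.relabel some)).branch g).mono le_rfl ?_
  rw [List.length_map]

end CSEmb

variable {α : Type}

/-- The letters `none` and `some i`, which agree once `i` is substituted for the variable. -/
def twin (i : α) (b : Bool) : Option α := if b then none else some i

lemma plug_map_twin (i : α) (v : List Bool) : plug i (v.map (twin i)) = .replicate v.length i := by
  simp only [plug, List.map_map, List.eq_replicate_iff, List.length_map, List.mem_map,
    true_and, Function.comp_apply]
  rintro _ ⟨_ | _, -, rfl⟩ <;> rfl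

lemma eq_or_eq_twin {i : α} {a a' : Option α} (h : a.getD i = a'.getD i) :
    a = a' ∨ ∃ b b', a = twin i b ∧ a' = twin i b' := by
  rcases a with _ | a <;> rcases a' with _ | a' <;> simp_all [twin]

/-- The bits of `Z`, read as letters `twin i`, pad the embeddings of the family `e`: `q` of them
come before the first letter and `m` of them after it. -/
def padFamily (i : α) (q m : ℕ) (e : List Bool → CSEmb (Option α)) (Z : List Bool) :
    CSEmb (Option α) :=
  .pad ((Z.take q).map (twin i)) (((Z.drop q).take m).map (twin i)) (e (Z.drop (q + m)))

/-- The average of `h` over the images of `x` under the embeddings `e Z` with `D` random bits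
`Z`. -/
noncomputable def familyAvg (D : ℕ) (e : List Bool → CSEmb (Option α)) (h : List (Option α) → ℝ)
    (x : List (Option α)) : ℝ :=
  avg D fun Z ↦ h ((e Z).eval id x)

section PadFamily

variable (i : α) {q m D M N : ℕ} {e : List Bool → CSEmb (Option α)} {Z : List Bool}

lemma relabel_padFamily {φ : CSEmb α}
    (he : ∀ Z, Z.length = D → (e Z).relabel (·.getD i) = φ) (hZ : Z.length = q + m + D) :
    (padFamily i q m e Z).relabel (·.getD i) = .pad (.replicate q i) (.replicate m i) φ := by
  have hq : (Z.take q).length = q := by simp; omega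
  have hm : ((Z.drop q).take m).length = m := by simp; omega
  rw [padFamily, CSEmb.relabel_pad, ← plug, ← plug, plug_map_twin, plug_map_twin, hq, hm,
    he _ (by simp [hZ])]

lemma lengthBound_padFamily (he : ∀ Z, Z.length = D → (e Z).LengthBound M N)
    (hZ : Z.length = q + m + D) : (padFamily i q m e Z).LengthBound (M + 1) (q + 1 + (m + N)) := by
  refine ((he (Z.drop (q + m)) (by simp [hZ])).pad _ _).mono le_rfl ?_
  simp only [List.length_map, List.length_take, List.length_drop]
  omega

lemma familyAvg_padFamily (h : List (Option α) → ℝ) (a : Option α) (y : List (Option α)) :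
    familyAvg (q + m + D) (padFamily i q m e) h (a :: y) =
      avg q fun v ↦ avg m fun s ↦
        familyAvg D e (fun z ↦ h (v.map (twin i) ++ a :: s.map (twin i) ++ z)) y := by
  rw [familyAvg, avg_append, avg_append]
  refine avg_congr fun v hv ↦ avg_congr fun s hs ↦ avg_congr fun Z _ ↦ ?_
  have hdrop : (v ++ s ++ Z).drop (q + m) = Z := List.drop_left' (by simp [hv, hs])
  rw [padFamily, hdrop, List.append_assoc, List.take_left' hv, List.drop_left' hv,
    List.take_left' hs]
  simp

lemma familyAvg_padFamily_twin (h : List (Option α) → ℝ) (b : Bool) (y : List (Option α)) :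
    familyAvg (q + m + D) (padFamily i q m e) h (twin i b :: y) =
      avg q fun c ↦ condAvg (q + 1 + m)
        (fun v ↦ familyAvg D e (fun z ↦ h (v.map (twin i) ++ z)) y) (c ++ [b]) := by
  rw [familyAvg_padFamily]
  refine avg_congr fun v hv ↦ ?_
  rw [condAvg, show q + 1 + m - (v ++ [b]).length = m by simp [hv]]
  simp

end PadFamily

variable {Ω : Type} [Fintype Ω] {p : Ω → ℝ} {β : Type} [Fintype β] [Nonempty β]

lemma IsSubprob.prod_div_card (hp : IsSubprob p) :
    IsSubprob fun x : Ω × β ↦ p x.1 / Fintype.card β where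
  nonneg x := div_nonneg (hp.nonneg _) (Nat.cast_nonneg _)
  sum_le_one := by
    simpa [Fintype.sum_prod_type, mul_div_cancel₀] using hp.sum_le_one

lemma sum_mul_le_card_mul_sum_prod (hp : ∀ ω, 0 ≤ p ω) {f : Ω × β → ℝ} (hf : ∀ x, 0 ≤ f x)
    (b : β) : ∑ ω, p ω * f (ω, b) ≤
      Fintype.card β * ∑ x : Ω × β, p x.1 / Fintype.card β * f x := by
  rw [Fintype.sum_prod_type_right, mul_sum]
  calc ∑ ω, p ω * f (ω, b) = Fintype.card β * ∑ ω, p ω / Fintype.card β * f (ω, b) := by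
        rw [mul_sum]
        refine sum_congr rfl fun ω _ ↦ ?_
        field_simp
    _ ≤ _ := single_le_sum
        (f := fun b ↦ (Fintype.card β : ℝ) * ∑ ω, p ω / Fintype.card β * f (ω, b))
        (fun b _ ↦ mul_nonneg (Nat.cast_nonneg _) <| sum_nonneg fun ω _ ↦
          mul_nonneg (div_nonneg (hp ω) (Nat.cast_nonneg _)) (hf _)) (mem_univ b)

lemma sum_mul_abs_avg_sub_le {Γ : Type} [Fintype Γ] [Nonempty Γ] {n : ℕ} {F G : Ω → List Γ → ℝ}
    (hp : ∀ ω, 0 ≤ p ω) {ε : ℝ}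
    (h : ∀ z, z.length = n → ∑ ω, p ω * |F ω z - G ω z| ≤ ε) :
    ∑ ω, p ω * |avg n (F ω) - avg n (G ω)| ≤ ε :=
  calc ∑ ω, p ω * |avg n (F ω) - avg n (G ω)|
    _ ≤ ∑ ω, avg n fun z ↦ p ω * |F ω z - G ω z| := by
        refine sum_le_sum fun ω _ ↦ ?_
        rw [← avg_sub, ← mul_avg]
        exact mul_le_mul_of_nonneg_left abs_avg_le_avg_abs (hp ω)
    _ ≤ ε := by
        rw [← avg_sum]
        exact avg_le h

lemma sum_mul_abs_sub_le_add (hp : ∀ ω, 0 ≤ p ω) {f g k : Ω → ℝ} {a b : ℝ}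
    (hfg : ∑ ω, p ω * |f ω - g ω| ≤ a) (hgk : ∑ ω, p ω * |g ω - k ω| ≤ b) :
    ∑ ω, p ω * |f ω - k ω| ≤ a + b := by
  refine le_trans ?_ (add_le_add hfg hgk)
  rw [← sum_add_distrib]
  refine sum_le_sum fun ω _ ↦ ?_
  rw [← mul_add]
  exact mul_le_mul_of_nonneg_left (abs_sub_le _ _ _) (hp ω)

/-- For words `x` shorter than `M`, replacing some letters `i` of `x` by the variable, or
conversely, changes the average of `h` over the random embedding `e` by at most `ε`. -/
def IsInsensitive (i : α) (p : Ω → ℝ) (h : Ω → List (Option α) → ℝ) (D M : ℕ) (ε : ℝ)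
    (e : List Bool → CSEmb (Option α)) : Prop :=
  ∀ x x' : List (Option α), x.length < M → plug i x = plug i x' →
    ∑ ω, p ω * |familyAvg D e (h ω) x - familyAvg D e (h ω) x'| ≤ ε

section Insensitive

variable {i : α} {h : Ω → List (Option α) → ℝ} {D M R q m : ℕ} {ε B : ℝ}
  {e : List Bool → CSEmb (Option α)}

lemma IsInsensitive.of_prod [Fintype α] (hp : ∀ ω, 0 ≤ p ω)
    (he : IsInsensitive i
      (fun x : Ω × (Fin R → Option α) ↦ p x.1 / Fintype.card (Fin R → Option α))
      (fun x z ↦ h x.1 (List.ofFn x.2 ++ z)) D M (ε / Fintype.card (Fin R → Option α)) e)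
    {g : List (Option α)} (hg : g.length = R) :
    IsInsensitive i p (fun ω z ↦ h ω (g ++ z)) D M ε e := by
  intro x x' hx hxx
  obtain ⟨v, rfl⟩ : ∃ v : Fin R → Option α, List.ofFn v = g := by
    subst hg
    exact ⟨g.get, List.ofFn_get g⟩
  refine (sum_mul_le_card_mul_sum_prod hp
    (f := fun y ↦ |familyAvg D e (fun z ↦ h y.1 (List.ofFn y.2 ++ z)) x -
      familyAvg D e (fun z ↦ h y.1 (List.ofFn y.2 ++ z)) x'|) (fun _ ↦ abs_nonneg _) v).trans ?_
  refine (mul_le_mul_of_nonneg_left (he x x' hx hxx) (Nat.cast_nonneg _)).trans_eq ?_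
  field_simp

lemma isInsensitive_padFamily (hp : ∀ ω, 0 ≤ p ω) (hε : 0 ≤ ε)
    (he : ∀ g : List (Option α), g.length = q + m + 1 →
      IsInsensitive i p (fun ω z ↦ h ω (g ++ z)) D M (ε / 2) e)
    (htwin : ∀ y : List (Option α), y.length < M → ∀ b b', ∑ ω, p ω *
      |familyAvg (q + m + D) (padFamily i q m e) (h ω) (twin i b :: y) -
        familyAvg (q + m + D) (padFamily i q m e) (h ω) (twin i b' :: y)| ≤ ε / 2) :
    IsInsensitive i p h (q + m + D) (M + 1) ε (padFamily i q m e) := by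
  rintro (_ | ⟨a, y⟩) (_ | ⟨a', y'⟩) hx hxx
  · simpa using hε
  · simp at hxx
  · simp at hxx
  simp only [List.map_cons, List.cons.injEq] at hxx
  have hy : y.length < M := by simpa using hx
  have hlen : y.length = y'.length := by simpa using congrArg List.length hxx.2
  have tail_le : ∑ ω, p ω * |familyAvg (q + m + D) (padFamily i q m e) (h ω) (a :: y) -
      familyAvg (q + m + D) (padFamily i q m e) (h ω) (a :: y')| ≤ ε / 2 := by
    simp only [familyAvg_padFamily]
    exact sum_mul_abs_avg_sub_le hp fun v hv ↦ sum_mul_abs_avg_sub_le hp fun s hs ↦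
      he _ (by simp; omega) y y' hy hxx.2
  have head_le : ∑ ω, p ω * |familyAvg (q + m + D) (padFamily i q m e) (h ω) (a :: y') -
      familyAvg (q + m + D) (padFamily i q m e) (h ω) (a' :: y')| ≤ ε / 2 := by
    rcases eq_or_eq_twin hxx.1 with rfl | ⟨b, b', rfl, rfl⟩
    · simp only [sub_self, abs_zero, mul_zero, sum_const_zero]
      positivity
    · exact htwin y' (hlen ▸ hy) b b'
  exact (sum_mul_abs_sub_le_add hp tail_le head_le).trans (add_halves ε).le

lemma exists_forall_familyAvg_twin_sub_le (i : α) (hp : IsSubprob p) (hB : ∀ ω z, |h ω z| ≤ B)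
    (D : ℕ) (e : List Bool → CSEmb (Option α)) (W : Finset (List (Option α))) (hε : 0 < ε) {r : ℕ}
    (hr : 32 * (#W * B ^ 2) ≤ (r + 1) * ε ^ 2) :
    ∃ q m, q + m = r ∧ ∀ y ∈ W, ∀ b b', ∑ ω, p ω *
      |familyAvg (q + m + D) (padFamily i q m e) (h ω) (twin i b :: y) -
        familyAvg (q + m + D) (padFamily i q m e) (h ω) (twin i b' :: y)| ≤ ε / 2 := by
  let F (y : List (Option α)) (ω : Ω) (v : List Bool) : ℝ :=
    familyAvg D e (fun z ↦ h ω (v.map (twin i) ++ z)) y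
  obtain ⟨q, hq, hlevel⟩ := exists_forall_sum_abs_avg_condAvg_sub_le (F := F) (s := id) (r := 1)
    (T := r + 1) (ε := ε / 4) hp (W := W) (fun y ω v ↦ abs_avg_le fun Z ↦ hB _ _)
    (fun i ↦ le_rfl) r.succ_pos (by positivity) (by
      simp only [Fintype.card_bool]
      push_cast
      linarith)
  obtain ⟨m, rfl⟩ := Nat.exists_eq_add_of_le (Nat.lt_succ_iff.1 hq)
  refine ⟨q, m, rfl, fun y hy b b' ↦ ?_⟩
  have hdist (b : Bool) : ∑ ω, p ω *
      |familyAvg (q + m + D) (padFamily i q m e) (h ω) (twin i b :: y) -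
        avg (q + m + 1) (F y ω)| ≤ ε / 4 := by
    simpa only [familyAvg_padFamily_twin, Nat.add_right_comm q 1 m, id_eq] using hlevel y hy [b] rfl
  have hdist' := hdist b'
  simp only [abs_sub_comm _ (avg (q + m + 1) _)] at hdist'
  exact (sum_mul_abs_sub_le_add hp.nonneg (hdist b) hdist').trans (by linarith)

end Insensitive

/-- Although random, the embeddings of the family agree after the variable is replaced by `i`. -/
lemma exists_isInsensitive [Finite α] (i : α) (B : ℝ) (M : ℕ) {ε : ℝ} (hε : 0 < ε) :
    ∃ N D : ℕ, ∀ (Ω : Type) [Fintype Ω] (p : Ω → ℝ) (h : Ω → List (Option α) → ℝ), IsSubprob p →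
      (∀ ω z, |h ω z| ≤ B) →
      ∃ (e : List Bool → CSEmb (Option α)) (φ : CSEmb α), IsInsensitive i p h D M ε e ∧
        ∀ Z, Z.length = D → (e Z).relabel (·.getD i) = φ ∧ (e Z).LengthBound M N := by
  have := Fintype.ofFinite α
  induction M generalizing ε with
  | zero =>
    exact ⟨0, 0, fun Ω _ p h _ _ ↦ ⟨fun _ ↦ .id, .id, fun x _ hx ↦ absurd hx (Nat.not_lt_zero _),
      fun _ _ ↦ ⟨rfl, .id 0⟩⟩⟩
  | succ M ih =>
    let W := (List.finite_length_lt (Option α) M).toFinset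
    obtain ⟨r, hr⟩ := exists_nat_ge (32 * (#W * B ^ 2) / ε ^ 2)
    have hr' : 32 * (#W * B ^ 2) ≤ (r + 1) * ε ^ 2 := by
      rw [div_le_iff₀ (by positivity)] at hr
      nlinarith
    have hcard : 0 < (Fintype.card (Fin (r + 1) → Option α) : ℝ) := by
      exact_mod_cast Fintype.card_pos
    obtain ⟨N, D, hND⟩ := ih (div_pos (half_pos hε) hcard)
    refine ⟨r + 1 + N, r + D, fun Ω _ p h hp hB ↦ ?_⟩
    obtain ⟨e, φ, hins, he⟩ := hND (Ω × (Fin (r + 1) → Option α)) _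
      (fun x z ↦ h x.1 (List.ofFn x.2 ++ z)) hp.prod_div_card fun x z ↦ hB _ _
    obtain ⟨q, m, rfl, htwin⟩ := exists_forall_familyAvg_twin_sub_le i hp hB D e W hε hr'
    exact ⟨padFamily i q m e, .pad (.replicate q i) (.replicate m i) φ,
      isInsensitive_padFamily hp.nonneg hε.le (fun g hg ↦ .of_prod hp.nonneg hins hg)
        fun y hy ↦ htwin y (by simpa [W] using hy),
      fun Z hZ ↦ ⟨relabel_padFamily i (fun Z hZ ↦ (he Z hZ).1) hZ,
        (lengthBound_padFamily i (fun Z hZ ↦ (he Z hZ).2) hZ).mono le_rfl (by omega)⟩⟩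

end Insensitivity

/-! ### Sets correlated with an intersection of insensitive sets -/

section Correlation

variable {α : Type}

/-- The excess of `Y` over density `τ` at the variable word `u`, on the event that `plug i u ∈ F i`
for all `i ∈ I`. -/
noncomputable def excess (τ : ℝ) (I : Finset α) (Y : Set (List (Option α)))
    (F : α → Set (List α)) (u : List (Option α)) : ℝ :=
  (𝟙[u ∈ Y] - τ) * 𝟙[∀ i ∈ I, plug i u ∈ F i]

/-- If `Y` has positive excess over density `τ` on the intersection of the events
`plug i u ∈ F i`, `i ∈ I`, then `Y` contains a line. -/
def CorrelationCS (α : Type) (τ : ℝ) (I : Finset α) : Prop :=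
  ∀ γ : ℝ, 0 < γ → ∃ N : ℕ, ∀ (Ω : Type) [Fintype Ω] (p : Ω → ℝ)
    (Y : Ω → Set (List (Option α))) (F : Ω → α → Set (List α)), IsSubprob p →
    (∀ u : List (Option α), u.length < N → γ ≤ ∑ ω, p ω * excess τ I (Y ω) (F ω) u) →
    ∃ ω, 0 < p ω ∧ HasLine (Y ω) N

section Excess

variable {τ : ℝ} {I : Finset α} {Y : Set (List (Option α))} {F : α → Set (List α)}
  {u : List (Option α)}

lemma abs_excess_le (hτ : 0 ≤ τ) : |excess τ I Y F u| ≤ 1 + τ := by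
  rw [excess, abs_mul, abs_of_nonneg (iverson_nonneg (∀ i ∈ I, _))]
  refine (mul_le_of_le_one_right (abs_nonneg _) (iverson_le_one _)).trans (abs_le.2 ?_)
  constructor <;> linarith [iverson_nonneg (u ∈ Y), iverson_le_one (u ∈ Y)]

lemma excess_insert [DecidableEq α] (i : α) :
    excess τ (insert i I) Y F u = excess τ I Y F u * 𝟙[plug i u ∈ F i] := by
  rw [excess, excess, mul_assoc, ← iverson_and]
  simp only [forall_mem_insert, and_comm]

lemma CSEmb.plug_eval_id (φ : CSEmb (Option α)) (i : α) (u : List (Option α)) :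
    plug i (φ.eval id u) = (φ.relabel (·.getD i)).eval id (plug i u) :=
  φ.map_eval id (·.getD i) u

lemma excess_eval_eval (φ : CSEmb (Option α)) (ρ : CSEmb α) :
    excess τ I Y F (φ.eval id (ρ.eval some u)) =
      excess τ I {u | φ.eval id (ρ.eval some u) ∈ Y}
        (fun i ↦ {x | (φ.relabel (·.getD i)).eval id (ρ.eval id x) ∈ F i}) u := by
  simp only [excess, φ.plug_eval_id, ρ.plug_eval, Set.mem_ofPred_eq]

end Excess

section Mass

variable {Ω ι : Type} [Fintype Ω] {p : Ω → ℝ}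

lemma isSubprob_inv_card (β : Type) [Fintype β] :
    IsSubprob fun _ : β ↦ (Fintype.card β : ℝ)⁻¹ where
  nonneg _ := by positivity
  sum_le_one := by simpa using mul_inv_le_one

lemma avg_eq_sum_inv_card_mul {Γ : Type} [Fintype Γ] (n : ℕ) (F : List Γ → ℝ) :
    avg n F = ∑ v : Fin n → Γ, (Fintype.card (Fin n → Γ) : ℝ)⁻¹ * F (List.ofFn v) := by
  rw [avg, Fintype.expect_eq_sum_div_card, div_eq_inv_mul, mul_sum]

/-- Functions `b y` which hardly differ from `b y₀` in mean are simultaneously large on much of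
the event `G`. -/
lemma le_sum_iverson_forall_le (hp : IsSubprob p) {W : Finset ι} {b : ι → Ω → ℝ} {y₀ : ι}
    {G : Ω → Prop} {B γ ε : ℝ} (hγ : 0 ≤ γ) (hB : 0 < B) (hb : ∀ ω, b y₀ ω ≤ B)
    (hG : γ ≤ ∑ ω, p ω * (b y₀ ω * 𝟙[G ω]))
    (hε : ∀ y ∈ W, ∑ ω, p ω * |b y₀ ω - b y ω| ≤ ε) (hW : #W * ε ≤ γ / 4) :
    γ / (2 * B) ≤ ∑ ω, p ω * 𝟙[G ω ∧ ∀ y ∈ W, γ / 4 ≤ b y ω] := by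
  set E : Ω → Prop := fun ω ↦ G ω ∧ ∀ y ∈ W, γ / 4 ≤ b y ω
  have pointwise (ω : Ω) :
      b y₀ ω * 𝟙[G ω] ≤ B * 𝟙[E ω] + (γ / 4 + ∑ y ∈ W, |b y₀ ω - b y ω|) := by
    have herr := sum_nonneg fun y (_ : y ∈ W) ↦ abs_nonneg (b y₀ ω - b y ω)
    by_cases hG : G ω
    · by_cases hE : E ω
      · rw [iverson_of hG, iverson_of hE]
        linarith [hb ω]
      · obtain ⟨y, hy, hlt⟩ : ∃ y ∈ W, b y ω < γ / 4 := by simpa [E, hG] using hE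
        have hle := single_le_sum (fun y _ ↦ abs_nonneg (b y₀ ω - b y ω)) hy
        rw [iverson_of hG, iverson_of_not hE]
        linarith [le_abs_self (b y₀ ω - b y ω)]
    · rw [iverson_of_not hG, iverson_of_not fun hE : E ω ↦ hG hE.1]
      linarith
  have hsum : γ ≤ B * (∑ ω, p ω * 𝟙[E ω]) + ((∑ ω, p ω) * (γ / 4) + #W * ε) :=
    calc γ ≤ ∑ ω, p ω * (B * 𝟙[E ω] + (γ / 4 + ∑ y ∈ W, |b y₀ ω - b y ω|)) :=
          hG.trans <| sum_le_sum fun ω _ ↦ mul_le_mul_of_nonneg_left (pointwise ω) (hp.nonneg ω)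
      _ = B * (∑ ω, p ω * 𝟙[E ω]) + ((∑ ω, p ω) * (γ / 4) +
            ∑ y ∈ W, ∑ ω, p ω * |b y₀ ω - b y ω|) := by
          simp only [mul_add, sum_add_distrib, mul_left_comm _ B, ← mul_sum, ← sum_mul]
          rw [sum_comm]
          simp only [mul_sum]
      _ ≤ _ := by
          gcongr
          simpa [nsmul_eq_mul] using sum_le_card_nsmul W _ ε hε
  rw [div_le_iff₀ (by positivity)]
  linarith [mul_le_of_le_one_left (by positivity : 0 ≤ γ / 4) hp.sum_le_one]

end Mass

variable {τ : ℝ} {I : Finset α}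

lemma DensityCS.correlationCS_empty (hτ : 0 ≤ τ) (h : DensityCS (Option α) τ) :
    CorrelationCS α τ ∅ := by
  intro γ hγ
  obtain ⟨N, hN⟩ := h.exists_relative
  refine ⟨N + 1, fun Ω _ p Y F hp hY ↦ ?_⟩
  have hdens (u : List (Option α)) (hu : u.length < N + 1) :
      γ + τ * ∑ ω, p ω ≤ ∑ ω, p ω * 𝟙[u ∈ Y ω] := by
    have := hY u hu
    have one (ω : Ω) : 𝟙[∀ i ∈ (∅ : Finset α), plug i u ∈ F ω i] = 1 := iverson_of (by simp)
    simp only [excess, one, mul_one, mul_sub, sum_sub_distrib, ← sum_mul] at this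
    linarith
  have hnonneg : 0 ≤ ∑ ω, p ω := sum_nonneg fun ω _ ↦ hp.nonneg ω
  have hpos : 0 < ∑ ω, p ω := by
    have := (hdens [] (by simp)).trans (sum_mul_iverson_le_sum hp.nonneg _)
    linarith [mul_nonneg hτ hnonneg]
  obtain ⟨ω, hω, hline⟩ := hN Ω p Y hp.nonneg hpos fun x hx ↦ by
    linarith [hdens x (by omega)]
  exact ⟨ω, hω, hline.mono N.le_succ⟩

lemma le_sum_familyAvg_mul_iverson [DecidableEq α] {Ω : Type} [Fintype Ω] {p : Ω → ℝ}
    {Y : Ω → Set (List (Option α))} {F : Ω → α → Set (List α)} {i : α} {γ : ℝ} {M N D : ℕ}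
    (hY : ∀ u : List (Option α), u.length < N →
      γ ≤ ∑ ω, p ω * excess τ (insert i I) (Y ω) (F ω) u)
    {e : List Bool → CSEmb (Option α)} {φ : CSEmb α}
    (he : ∀ Z, Z.length = D → (e Z).relabel (·.getD i) = φ ∧ (e Z).LengthBound M N)
    {u : List (Option α)} (hu : u.length < M) :
    γ ≤ ∑ ω, p ω * (familyAvg D e (excess τ I (Y ω) (F ω)) u *
      𝟙[φ.eval id (plug i u) ∈ F ω i]) :=
  calc γ = avg D fun _ : List Bool ↦ γ := (avg_const D γ).symm
    _ ≤ avg D fun Z ↦ ∑ ω, p ω * 𝟙[φ.eval id (plug i u) ∈ F ω i] *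
          excess τ I (Y ω) (F ω) ((e Z).eval id u) := by
        refine avg_mono fun Z hZ ↦ (hY _ ((he Z hZ).2 id u hu)).trans_eq ?_
        refine sum_congr rfl fun ω _ ↦ ?_
        rw [excess_insert, (e Z).plug_eval_id, (he Z hZ).1]
        ring
    _ = _ := by
        rw [avg_sum]
        refine sum_congr rfl fun ω _ ↦ ?_
        rw [← mul_avg, familyAvg]
        ring

lemma CorrelationCS.insert [Finite α] [DecidableEq α] (h : ∀ δ : ℝ, 0 < δ → DensityCS α δ)
    (hτ : 0 ≤ τ) (hI : CorrelationCS α τ I) (i : α) : CorrelationCS α τ (insert i I) := by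
  intro γ hγ
  obtain ⟨M, hM⟩ := hI (γ / 4) (by positivity)
  obtain ⟨M', hM'⟩ := exists_emb_mem h M (δ := γ / (2 * (1 + τ))) (by positivity)
  let W := (List.finite_length_lt (Option α) M').toFinset
  obtain ⟨N, D, hins⟩ := exists_isInsensitive i (1 + τ) M' (ε := γ / (4 * (#W + 1))) (by positivity)
  refine ⟨N, fun Ω _ p Y F hp hY ↦ ?_⟩
  obtain ⟨e, φ, hε, he⟩ := hins Ω p (fun ω ↦ excess τ I (Y ω) (F ω)) hp fun ω u ↦ abs_excess_le hτ
  set b : List (Option α) → Ω → ℝ := fun u ω ↦ familyAvg D e (excess τ I (Y ω) (F ω)) u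
  obtain ⟨ω, hω, ρ, hρ, hX⟩ := hM' Ω p
    (fun ω ↦ {x | φ.eval id x ∈ F ω i ∧ ∀ u ∈ W.filter (plug i · = x), γ / 4 ≤ b u ω}) hp
    fun x hx ↦ by
      have hx' : (x.map some).length < M' := by simpa using hx
      refine le_sum_iverson_forall_le hp hγ.le (by positivity)
        (fun ω ↦ (abs_le.1 (abs_avg_le fun Z ↦ abs_excess_le hτ)).2)
        (by simpa using le_sum_familyAvg_mul_iverson hY he hx')
        (fun u hu ↦ hε _ u hx' (by simpa using (mem_filter.1 hu).2.symm)) ?_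
      calc (#{u ∈ W | plug i u = x} : ℝ) * (γ / (4 * (#W + 1)))
        _ ≤ (#W + 1) * (γ / (4 * (#W + 1))) := by
            gcongr
            exact_mod_cast (card_filter_le W _).trans (Nat.le_succ _)
        _ = γ / 4 := by field_simp
  obtain ⟨v, -, hline⟩ := hM (Fin D → Bool) _
    (fun v ↦ {u | (e (List.ofFn v)).eval id (ρ.eval some u) ∈ Y ω})
    (fun v j ↦ {x | ((e (List.ofFn v)).relabel (·.getD j)).eval id (ρ.eval id x) ∈ F ω j})
    (isSubprob_inv_card _) fun u hu ↦ by
      have hmem : ρ.eval some u ∈ W := by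
        simpa [W] using (hρ.mono M.le_succ le_rfl) some u hu
      refine ((hX (plug i u) (by simpa using hu.le)).2 _
        (mem_filter.2 ⟨hmem, ρ.plug_eval u i⟩)).trans_eq ?_
      simp only [b, familyAvg, avg_eq_sum_inv_card_mul, excess_eval_eval]
  exact ⟨ω, hω, CSEmb.LengthBound.hasLine (φ := (e (List.ofFn v)).comp (ρ.relabel some))
    ((he _ (by simp)).2.comp ((hρ.mono M.le_succ le_rfl).relabel some)) hline⟩

lemma DensityCS.correlationCS [Finite α] (h : ∀ δ : ℝ, 0 < δ → DensityCS α δ) (hτ : 0 ≤ τ)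
    (hα : DensityCS (Option α) τ) (I : Finset α) : CorrelationCS α τ I := by
  classical
  induction I using Finset.induction_on with
  | empty => exact hα.correlationCS_empty hτ
  | insert i I _ ih => exact ih.insert h hτ i

end Correlation

/-! ### Density increment -/

section Increment

variable {Ω α : Type} [Fintype Ω] {p : Ω → ℝ} {δ δ₀ τ θ : ℝ}

lemma hasLine_of_lineIn_map_some {S : Set (List (Option α))} {w : List (Option α)} (hvar : none ∈ w)
    (hw : w ∈ S) (h : LineIn w {x | x.map some ∈ S}) : HasLine S (w.length + 1) := by
  obtain ⟨c, u, rfl⟩ := exists_eq_map_some_append_none hvar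
  obtain ⟨hc, hu⟩ := lineIn_map_some_append_none.1 h
  refine ⟨(c.map some).map some ++ none :: u.map (Option.map some), by simp, by simp,
    lineIn_map_some_append_none.2 ⟨hc, ?_⟩⟩
  rintro (_ | a)
  · have : plug none (u.map (Option.map some)) = u := by
      rw [plug, List.map_map]
      exact (List.map_congr_left (by rintro (_ | _) _ <;> rfl)).trans u.map_id
    rwa [this]
  · have : plug (some a) (u.map (Option.map some)) = (plug a u).map some := by
      simp only [plug, List.map_map, Function.comp_def, Option.getD_map]
    simpa [this] using hu a

lemma le_sum_sub_mul_iverson_not (hp : IsSubprob p) {X Λ : Ω → Prop}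
    (hdisj : ∀ ω, 0 < p ω → X ω → ¬Λ ω) (hτ : 0 ≤ τ) (hX : δ ≤ ∑ ω, p ω * 𝟙[X ω])
    (hΛ : θ ≤ ∑ ω, p ω * 𝟙[Λ ω]) :
    δ - τ + τ * θ ≤ ∑ ω, p ω * ((𝟙[X ω] - τ) * 𝟙[¬Λ ω]) := by
  have pointwise (ω : Ω) :
      p ω * ((𝟙[X ω] - τ) * 𝟙[¬Λ ω]) = p ω * 𝟙[X ω] - τ * p ω + τ * (p ω * 𝟙[Λ ω]) := by
    have : p ω * (𝟙[X ω] * 𝟙[Λ ω]) = 0 := by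
      rw [← iverson_and]
      rcases (hp.nonneg ω).lt_or_eq with h | h
      · rw [iverson_of_not fun hω ↦ hdisj ω h hω.1 hω.2, mul_zero]
      · rw [← h, zero_mul]
    rw [iverson_not]
    linear_combination -this
  simp only [pointwise, sum_add_distrib, sum_sub_distrib, ← mul_sum]
  linarith [mul_le_mul_of_nonneg_left hΛ hτ, mul_le_of_le_one_right hτ hp.sum_le_one]

lemma exists_div_card_le_sum_mul_iverson {κ : Type} [Fintype κ] [Nonempty κ] (f : Ω → ℝ)
    (s : Ω → κ) :
    ∃ k, (∑ ω, f ω) / Fintype.card κ ≤ ∑ ω, f ω * 𝟙[s ω = k] := by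
  have total : ∑ k, ∑ ω, f ω * 𝟙[s ω = k] = ∑ ω, f ω := by
    rw [sum_comm]
    refine sum_congr rfl fun ω _ ↦ ?_
    rw [← mul_sum, sum_eq_single (s ω) (fun k _ hk ↦ iverson_of_not hk.symm) (by simp),
      iverson_of rfl, mul_one]
  obtain ⟨k, -, hk⟩ := exists_le_of_sum_le (s := univ)
    (f := fun _ : κ ↦ (∑ ω, f ω) / Fintype.card κ) univ_nonempty <| by
      rw [total, sum_const, card_univ, nsmul_eq_mul, mul_div_cancel₀ _ (by positivity)]
  exact ⟨k, hk⟩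

/-- The complement of an intersection is partitioned by the pattern of events that hold; by the
colouring theorem one pattern carries a fixed share of the excess. -/
lemma CorrelationCS.exists_hasLine_of_compl [Fintype α] (h : CorrelationCS α τ univ) {γ : ℝ}
    (hγ : 0 < γ) :
    ∃ N : ℕ, ∀ (Ω : Type) [Fintype Ω] (p : Ω → ℝ) (Y : Ω → Set (List (Option α)))
      (Q : Ω → Prop) (E : Ω → α → Set (List α)), IsSubprob p →
      (∀ u : List (Option α), u.length < N →
        γ ≤ ∑ ω, p ω * ((𝟙[u ∈ Y ω] - τ) * 𝟙[¬(Q ω ∧ ∀ i, plug i u ∈ E ω i)])) →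
      ∃ ω, 0 < p ω ∧ HasLine (Y ω) N := by
  have := Fintype.ofFinite (Prop × (α → Prop))
  obtain ⟨M, hM⟩ := h (γ / Fintype.card (Prop × (α → Prop))) (by positivity)
  obtain ⟨N, hN⟩ := exists_hasMonoEmb (β := Option α) (κ := Prop × (α → Prop)) fun _ ↦ M
  refine ⟨N, fun Ω _ p Y Q E hp hY ↦ ?_⟩
  choose χ hχ using fun u : List (Option α) ↦ exists_div_card_le_sum_mul_iverson
    (fun ω ↦ p ω * ((𝟙[u ∈ Y ω] - τ) * 𝟙[¬(Q ω ∧ ∀ i, plug i u ∈ E ω i)]))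
    (fun ω ↦ (Q ω, fun i ↦ plug i u ∈ E ω i))
  obtain ⟨⟨q, e⟩, φ, hφ, hcol⟩ := hN χ
  obtain ⟨ω, hω, hline⟩ := hM Ω (fun ω ↦ p ω * 𝟙[Q ω = q ∧ ¬(q ∧ ∀ i, e i)])
    (fun ω ↦ {u | φ.eval id u ∈ Y ω})
    (fun ω i ↦ {x | ((φ.relabel (·.getD i)).eval id x ∈ E ω i) = e i}) (hp.mul_iverson _)
    fun u hu ↦ by
      refine (div_le_div_of_nonneg_right (hY _ (hφ id u hu)) (by positivity)).trans
        ((hχ _).trans_eq (sum_congr rfl fun ω _ ↦ ?_))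
      have pattern : (¬(Q ω ∧ ∀ i, plug i (φ.eval id u) ∈ E ω i) ∧
          (Q ω, fun i ↦ plug i (φ.eval id u) ∈ E ω i) = (q, e)) ↔
          (Q ω = q ∧ ¬(q ∧ ∀ i, e i)) ∧ ∀ i, (plug i (φ.eval id u) ∈ E ω i) = e i := by
        simp only [Prod.mk.injEq, funext_iff]
        constructor
        · rintro ⟨hne, rfl, he⟩
          simpa only [he, true_and, and_true, implies_true] using hne
        · rintro ⟨⟨rfl, hne⟩, he⟩
          simpa only [he, true_and, and_true, implies_true] using hne
      rw [hcol u hu, mul_assoc, mul_assoc, ← iverson_and, pattern, iverson_and, excess]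
      simp only [mem_univ, true_imp_iff, Set.mem_ofPred_eq, φ.plug_eval_id]
      ring
  exact ⟨ω, pos_of_mul_pos_left hω (iverson_nonneg _), hφ.hasLine hline⟩

/-- If `X` contains no line, it misses the set `Λ` of points completing a line with the letters of
`α`. As `Λ` has positive density by the induction hypothesis, `X` is denser on its complement. -/
lemma DensityCS.exists_increment [Finite α] (h : ∀ δ : ℝ, 0 < δ → DensityCS α δ) (hδ₀ : 0 < δ₀) :
    ∃ g : ℝ, 0 < g ∧ ∀ δ, δ₀ ≤ δ → DensityCS (Option α) (δ + g) → DensityCS (Option α) δ := by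
  have := Fintype.ofFinite α
  obtain ⟨θ, hθ, hcount⟩ := exists_forall_le_sum_lineIn h hδ₀
  refine ⟨δ₀ * θ / 2, by positivity, fun δ hδ hinc ↦ ?_⟩
  have hτ : 0 ≤ δ + δ₀ * θ / 2 := add_nonneg (hδ₀.le.trans hδ) (by positivity)
  obtain ⟨M, hM⟩ := (hinc.correlationCS h hτ univ).exists_hasLine_of_compl
    (γ := δ₀ * θ / 2) (by positivity)
  obtain ⟨N, hN⟩ := hcount M
  refine ⟨N, fun Ω _ p X hp hX ↦ ?_⟩
  by_contra! hno
  obtain ⟨ψ, c, hψ, hline⟩ := hN Ω p (fun ω ↦ {x | x.map some ∈ X ω}) hp fun x hx ↦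
    hδ.trans (hX (x.map some) (by simpa using hx))
  let ξ : CSEmb (Option α) := (ψ.relabel some).comp (.prepend (c.map some ++ [none]))
  have hξ : ξ.LengthBound M N := by
    refine (hψ.relabel some).comp ((CSEmb.LengthBound.prepend _ M).mono le_rfl ?_)
    simp
  have ξ_eval (u : List (Option α)) : ξ.eval id u = ψ.eval some (c.map some ++ none :: u) := by
    simp [ξ]
  have lineIn_iff (u : List (Option α)) (ω : Ω) : LineIn (ξ.eval id u) {x | x.map some ∈ X ω} ↔
      (ψ.eval id c).map some ∈ X ω ∧ ∀ i, (ψ.eval id (c ++ i :: plug i u)).map some ∈ X ω := by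
    rw [ξ_eval, CSEmb.lineIn_eval_iff (by simp), lineIn_map_some_append_none]
    rfl
  obtain ⟨ω, hω, hY⟩ := hM Ω p (fun ω ↦ {u | ξ.eval id u ∈ X ω})
    (fun ω ↦ (ψ.eval id c).map some ∈ X ω)
    (fun ω i ↦ {x | (ψ.eval id (c ++ i :: x)).map some ∈ X ω}) hp fun u hu ↦ by
      simp only [Set.mem_ofPred_eq, ← lineIn_iff]
      have hdisj (ω : Ω) (hω : 0 < p ω) (hmem : ξ.eval id u ∈ X ω) :
          ¬LineIn (ξ.eval id u) {x | x.map some ∈ X ω} := fun hw ↦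
        hno ω hω <| (hasLine_of_lineIn_map_some
          (by rw [ξ_eval]; exact CSEmb.none_mem_eval (by simp)) hmem hw).mono (hξ id u hu)
      refine le_trans ?_ (le_sum_sub_mul_iverson_not hp hdisj hτ (hX _ (hξ id u hu))
        (ξ_eval u ▸ hline u hu))
      nlinarith [mul_le_mul_of_nonneg_right hδ hθ.le, mul_pos (mul_pos hδ₀ hθ) hθ]
  exact hno ω hω (hξ.hasLine hY)

theorem densityCS (α : Type) [Finite α] (δ : ℝ) (hδ : 0 < δ) : DensityCS α δ := by
  induction α using Finite.induction_empty_option generalizing δ with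
  | of_equiv e ih => exact (ih δ hδ).congr e
  | h_empty => exact densityCS_of_isEmpty hδ
  | @h_option α _ ih =>
    obtain ⟨g, hg, hinc⟩ := DensityCS.exists_increment ih hδ
    have descend (n : ℕ) (δ' : ℝ) (hδ' : δ ≤ δ') (hn : 1 < δ' + n * g) :
        DensityCS (Option α) δ' := by
      induction n generalizing δ' with
      | zero => exact densityCS_of_one_lt (by simpa using hn)
      | succ n ihn =>
        refine hinc δ' hδ' (ihn (δ' + g) (by linarith) ?_)
        push_cast at hn
        linarith
    obtain ⟨n, hn⟩ := Archimedean.arch 2 hg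
    rw [nsmul_eq_mul] at hn
    exact descend n δ le_rfl (by linarith)

end Increment

/-! ### Correlations between the levels of a set -/

section Correlation

variable {Γ : Type} [Fintype Γ] [Nonempty Γ] {n s t l : ℕ} {δ : ℝ}

lemma avg_take_of_le (h : n ≤ l) (F : List Γ → ℝ) : (avg l fun z ↦ F (z.take n)) = avg n F := by
  obtain ⟨m, rfl⟩ := Nat.exists_eq_add_of_le h
  exact avg_take n m F

lemma condAvg_eq_avg_take (l : ℕ) (F : List Γ → ℝ) (c : List Γ) :
    condAvg l F c = avg l fun z ↦ F (c ++ z.take (l - c.length)) :=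
  (avg_take_of_le (Nat.sub_le _ _) fun z ↦ F (c ++ z)).symm

lemma sum_sum_ite_eq_add (R : ℕ) (c : ℝ) :
    ∑ i ∈ range R, ∑ j ∈ range R, ((if i = j then 1 else 0) + c) = R + R * (R * c) := by
  have diagonal : ∑ i ∈ range R, ∑ j ∈ range R, (if i = j then (1 : ℝ) else 0) = R := by
    rw [sum_congr rfl fun i hi ↦ by rw [sum_ite_eq, if_pos hi]]
    simp
  simp only [sum_add_distrib, diagonal]
  simp

/-- Compare the first and second moments of the number of events that occur. -/
lemma exists_lt_le_avg_iverson_mul_iverson (hδ : 0 < δ) {R : ℕ} (hR : 2 < R * δ ^ 2)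
    (E : ℕ → List Γ → Prop) (hE : ∀ i < R, δ ≤ avg n fun z ↦ 𝟙[E i z]) :
    ∃ i j, i < j ∧ j < R ∧ δ ^ 2 / 2 ≤ avg n fun z ↦ 𝟙[E i z] * 𝟙[E j z] := by
  by_contra! hcorr
  have pair_le (i j : ℕ) (hi : i < R) (hj : j < R) :
      (avg n fun z ↦ 𝟙[E i z] * 𝟙[E j z]) ≤ (if i = j then 1 else 0) + δ ^ 2 / 2 := by
    rcases lt_trichotomy i j with h | rfl | h
    · rw [if_neg h.ne, zero_add]
      exact (hcorr i j h hj).le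
    · rw [if_pos rfl]
      refine (avg_le fun z _ ↦ ?_).trans (le_add_of_nonneg_right (by positivity))
      exact mul_le_one₀ (iverson_le_one _) (iverson_nonneg _) (iverson_le_one _)
    · simp only [if_neg h.ne', zero_add, mul_comm 𝟙[E i _]]
      exact (hcorr j i h hi).le
  have first_moment : R * δ ≤ avg n fun z ↦ ∑ i ∈ range R, 𝟙[E i z] := by
    rw [avg_sum, ← nsmul_eq_mul, ← card_range R, ← sum_const, card_range]
    exact sum_le_sum fun i hi ↦ hE i (mem_range.1 hi)
  have second_moment : (avg n fun z ↦ (∑ i ∈ range R, 𝟙[E i z]) ^ 2) ≤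
      R + R * (R * (δ ^ 2 / 2)) := by
    simp only [sq (∑ _i ∈ range R, _), sum_mul_sum, avg_sum]
    rw [← sum_sum_ite_eq_add]
    exact sum_le_sum fun i hi ↦ sum_le_sum fun j hj ↦
      pair_le i j (mem_range.1 hi) (mem_range.1 hj)
  have hR₀ : (0 : ℝ) < R := pos_of_mul_pos_left (by linarith) (sq_nonneg δ)
  have := (pow_le_pow_left₀ (by positivity) first_moment 2).trans
    (sq_avg_le_avg_sq.trans second_moment)
  nlinarith

/-- For `c ∈ A`, the probability that a random extension of `c` of length `l` lies in `A`. -/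
noncomputable def extWeight (A : Set (List Γ)) (l : ℕ) (c : List Γ) : ℝ :=
  𝟙[c ∈ A] * condAvg l (fun z ↦ 𝟙[z ∈ A]) c

lemma abs_extWeight_le_one (A : Set (List Γ)) (l : ℕ) (c : List Γ) : |extWeight A l c| ≤ 1 := by
  have hcond : 0 ≤ condAvg l (fun z ↦ 𝟙[z ∈ A]) c := avg_nonneg fun _ ↦ iverson_nonneg _
  rw [extWeight, abs_of_nonneg (mul_nonneg (iverson_nonneg _) hcond)]
  exact mul_le_one₀ (iverson_le_one _) hcond (avg_le fun _ _ ↦ iverson_le_one _)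

lemma avg_extWeight (A : Set (List Γ)) (hst : s ≤ t) (htn : t ≤ n) :
    avg s (extWeight A t) = avg n fun z ↦ 𝟙[z.take s ∈ A] * 𝟙[z.take t ∈ A] := by
  have restrict : (avg n fun z : List Γ ↦ 𝟙[z.take s ∈ A] * 𝟙[z.take t ∈ A]) =
      avg t fun z ↦ 𝟙[z.take s ∈ A] * 𝟙[z ∈ A] := by
    rw [← avg_take_of_le htn]
    simp only [List.take_take, min_eq_left hst]
  obtain ⟨m, rfl⟩ := Nat.exists_eq_add_of_le hst
  rw [restrict, avg_append]
  refine avg_congr fun c hc ↦ ?_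
  subst hc
  simp only [extWeight, condAvg, Nat.add_sub_cancel_left, mul_avg, List.take_left]

/-- Otherwise some sequence of levels of `A` would be pairwise too weakly correlated. -/
lemma infinite_setOf_eventually_le_avg_extWeight (hδ : 0 < δ) {A : Set (List Γ)} {L : Set ℕ}
    (hA : ∀ l ∈ L, δ ≤ avg l fun z ↦ 𝟙[z ∈ A]) {U : Ultrafilter ℕ}
    (hU : (U : Filter ℕ) ≤ Filter.cofinite) (hL : L ∈ U) :
    {t ∈ L | ∀ᶠ l in U, δ ^ 2 / 2 ≤ avg t (extWeight A l)}.Infinite := by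
  intro hfin
  set H := {t ∈ L | ∀ᶠ l in U, δ ^ 2 / 2 ≤ avg t (extWeight A l)}
  obtain ⟨f, hfL, hf⟩ := exists_seq_of_forall_finset_exists (fun t ↦ t ∈ L ∧ t ∉ H)
    (fun s t ↦ s < t ∧ avg s (extWeight A t) < δ ^ 2 / 2) fun S hS ↦ by
      have hweak : ∀ᶠ l in U, ∀ t ∈ S, t < l ∧ avg t (extWeight A l) < δ ^ 2 / 2 := by
        refine S.eventually_all.2 fun t ht ↦ Filter.Eventually.and ?_ ?_
        · exact hU (Nat.cofinite_eq_atTop ▸ Filter.eventually_gt_atTop t)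
        · simpa only [← not_le] using
            Ultrafilter.eventually_not.2 fun h ↦ (hS t ht).2 ⟨(hS t ht).1, h⟩
      have hLH : ∀ᶠ l in U, l ∈ L ∧ l ∉ H :=
        Filter.Eventually.and hL (hU hfin.compl_mem_cofinite)
      exact (hLH.and hweak).exists
  have hmono : StrictMono f := fun i j hij ↦ (hf i j hij).1
  obtain ⟨R, hR⟩ := exists_nat_gt (2 / δ ^ 2)
  rw [div_lt_iff₀ (by positivity)] at hR
  obtain ⟨i, j, hij, hjR, hcorr⟩ := exists_lt_le_avg_iverson_mul_iverson (n := f R) hδ hR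
    (fun i z ↦ z.take (f i) ∈ A) fun i hi ↦
      (hA _ (hfL i).1).trans_eq (avg_take_of_le (hmono hi).le fun z ↦ 𝟙[z ∈ A]).symm
  rw [← avg_extWeight A (hmono hij).le (hmono hjR).le] at hcorr
  exact (hf i j hij).2.not_ge hcorr

end Correlation

/-! ### Interleaving a word with fixed blocks and copies of a pattern -/

/-- The word `z₀ p(x₀) z₁ p(x₁) ⋯ zₘ` obtained by substituting the letters of `x = x₀ ⋯ xₘ₋₁` into
copies of the pattern `p` and separating these by the blocks `zᵢ`; as for `CSEmb`, the letters of
`x` come from any alphabet `γ` in which the letters of `p` and of the blocks are interpreted. -/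
def interleave {Γ γ : Type} (p : List (Option Γ)) (ι : Γ → γ) : List (List Γ) → List γ → List γ
  | [], _ => []
  | z :: _, [] => z.map ι
  | z :: zs, a :: x => z.map ι ++ (p.map (·.elim a ι) ++ interleave p ι zs x)

/-- The length of `interleave p ι zs x` when the pattern has length `r`, the blocks have lengths
`ds`, and `x` has length `m`. -/
def level (r : ℕ) (ds : List ℕ) (m : ℕ) : ℕ := (ds.take (m + 1)).sum + m * r

section Interleave

variable {Γ γ γ' : Type} {p : List (Option Γ)}

lemma level_cons_zero (r d : ℕ) (ds : List ℕ) : level r (d :: ds) 0 = d := by simp [level]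

lemma level_cons_succ (r d : ℕ) (ds : List ℕ) (m : ℕ) :
    level r (d :: ds) (m + 1) = d + (r + level r ds m) := by
  simp only [level, List.take_succ_cons, List.sum_cons]
  ring

lemma level_modifyHead {r g m : ℕ} {ds : List ℕ} (hm : m < ds.length) :
    level r (ds.modifyHead (g + ·)) m = g + level r ds m := by
  cases ds with
  | nil => simp at hm
  | cons d ds => simp [level, add_assoc]

lemma map_interleave (ι : Γ → γ) (f : γ → γ') (zs : List (List Γ)) (x : List γ) :
    (interleave p ι zs x).map f = interleave p (f ∘ ι) zs (x.map f) := by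
  induction zs generalizing x with
  | nil => rfl
  | cons z zs ih =>
    cases x with
    | nil => simp [interleave]
    | cons a x =>
      have h : f ∘ (fun o : Option Γ ↦ o.elim a ι) = (·.elim (f a) (f ∘ ι)) := by
        funext o; cases o <;> rfl
      simp [interleave, ih, h]

lemma length_interleave (ι : Γ → γ) {zs : List (List Γ)} {x : List γ} (hx : x.length < zs.length) :
    (interleave p ι zs x).length = level p.length (zs.map List.length) x.length := by
  induction zs generalizing x with
  | nil => simp at hx
  | cons z zs ih =>
    cases x with
    | nil => simp [interleave, level]
    | cons a x => simp [interleave, level_cons_succ, ih (by simpa using hx : x.length < zs.length)]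

lemma exists_interleave_append_cons (ι : Γ → γ) {zs : List (List Γ)} {x : List γ}
    (hx : x.length < zs.length) (a : γ) (y : List γ) :
    ∃ u, interleave p ι zs (x ++ a :: y) =
      interleave p ι zs x ++ (p.map (·.elim a ι) ++ u) := by
  induction zs generalizing x with
  | nil => simp at hx
  | cons z zs ih =>
    cases x with
    | nil => exact ⟨_, rfl⟩
    | cons b x =>
      obtain ⟨u, hu⟩ := ih (by simpa using hx : x.length < zs.length)
      exact ⟨u, by simp [interleave, hu]⟩

lemma length_stem_lt {w : List (Option Γ)} (h : none ∈ w) : (stem w).length < w.length := by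
  obtain ⟨c, u, rfl⟩ := exists_eq_map_some_append_none h
  simp [stem_map_some_append_none]

lemma exists_prefix_interleave_plug {zs : List (List Γ)} {w : List (Option Γ)} (hvar : none ∈ w)
    (hw : w.length ≤ zs.length) :
    ∃ w', p <+: w' ∧ ∀ a,
      interleave p id zs (plug a w) = interleave p id zs (stem w) ++ plug a w' := by
  have plug_interleave (x : List (Option Γ)) (a : Γ) :
      plug a (interleave p some zs x) = interleave p id zs (plug a x) :=
    map_interleave some (·.getD a) zs x
  obtain ⟨c, y, rfl⟩ := exists_eq_map_some_append_none hvar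
  have hlen : (c.map some).length < zs.length := by
    simp only [List.length_append, List.length_cons] at hw
    omega
  obtain ⟨u, hu⟩ := exists_interleave_append_cons (p := p) some hlen none y
  have hp : p.map (fun o ↦ o.elim none some) = p := by
    conv_rhs => rw [← List.map_id p]
    congr 1
    funext o; cases o <;> rfl
  have hc : interleave p some zs (c.map some) = (interleave p id zs c).map some :=
    (map_interleave id some zs c).symm
  refine ⟨p ++ u, List.prefix_append _ _, fun a ↦ ?_⟩
  rw [← plug_interleave, hu, hp, hc, stem_map_some_append_none, plug, List.map_append]
  congr 1
  exact plug_map_some a _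

end Interleave

section Average

variable {Γ : Type} [Fintype Γ]

/-- The average of `F` over the words beginning with `c` and continued by `x` interleaved with
random blocks of lengths `ds`. -/
noncomputable def interleaveAvg (p : List (Option Γ)) (F : List Γ → ℝ) (ds : List ℕ)
    (x c : List Γ) : ℝ :=
  avg ds.sum fun Z ↦ F (c ++ interleave p id (ds.splitLengths Z) x)

variable {p : List (Option Γ)} {F : List Γ → ℝ}

lemma interleaveAvg_cons_cons (d : ℕ) (ds : List ℕ) (a : Γ) (x c : List Γ) :
    interleaveAvg p F (d :: ds) (a :: x) c =
      avg d fun z ↦ interleaveAvg p F ds x (c ++ z ++ plug a p) := by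
  rw [interleaveAvg, List.sum_cons, avg_append]
  refine avg_congr fun z hz ↦ ?_
  subst hz
  simp [interleaveAvg, interleave, plug, elim_id_eq_getD]

variable [Nonempty Γ]

lemma interleaveAvg_cons_nil (d : ℕ) (ds : List ℕ) (c : List Γ) :
    interleaveAvg p F (d :: ds) [] c = avg d fun z ↦ F (c ++ z) := by
  rw [interleaveAvg, List.sum_cons, ← avg_take_of_le (Nat.le_add_right d ds.sum)]
  simp [interleave]

lemma abs_interleaveAvg_le {B : ℝ} (hF : ∀ z, |F z| ≤ B) (ds : List ℕ) (x c : List Γ) :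
    |interleaveAvg p F ds x c| ≤ B :=
  abs_avg_le fun _ ↦ hF _

lemma interleaveAvg_modifyHead (g : ℕ) {ds : List ℕ} {x : List Γ} (hx : x.length < ds.length)
    (c : List Γ) : interleaveAvg p F (ds.modifyHead (g + ·)) x c =
      avg g fun z ↦ interleaveAvg p F ds x (c ++ z) := by
  cases ds with
  | nil => simp at hx
  | cons d ds =>
    cases x with
    | nil => simp [interleaveAvg_cons_nil, avg_append]
    | cons a x => simp [interleaveAvg_cons_cons, avg_append]

end Average

section BlockLengths

variable {Γ : Type} [Fintype Γ] [Nonempty Γ] {p : List (Option Γ)} {F : List Γ → ℝ} {ε : ℝ}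

lemma exists_seq_mem_add_le {H : Set ℕ} (hH : H.Infinite) (n₀ r : ℕ) :
    ∃ s : ℕ → ℕ, (∀ i, s i ∈ H ∧ n₀ ≤ s i) ∧ ∀ i j, i < j → s i + r ≤ s j :=
  exists_seq_of_forall_finset_exists (fun t ↦ t ∈ H ∧ n₀ ≤ t) (fun a b ↦ a + r ≤ b) fun S _ ↦ by
    obtain ⟨b, hb, hlt⟩ := hH.exists_gt (n₀ + r + S.sup id)
    refine ⟨b, ⟨hb, by omega⟩, fun a ha ↦ ?_⟩
    have : a ≤ S.sup id := le_sup (f := id) ha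
    omega

lemma exists_forall_avg_sub_le_avg_condAvg {ι : Type} (W : Finset ι) {s : ℕ → ℕ} {r : ℕ}
    (hs : ∀ i, s i + r ≤ s (i + 1)) (B : ℝ) (hε : 0 < ε) :
    ∃ T, ∀ G : ι → List Γ → ℝ, (∀ x z, |G x z| ≤ B) → ∃ i < T, ∀ x ∈ W, ∀ e : List Γ,
      e.length = r →
        avg (s T) (G x) - ε ≤ avg (s i) fun c ↦ condAvg (s T) (G x) (c ++ e) := by
  have hp : IsSubprob fun _ : Unit ↦ (1 : ℝ) := ⟨fun _ ↦ zero_le_one, by simp⟩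
  obtain ⟨T, hT⟩ := exists_nat_gt ((Fintype.card Γ : ℝ) ^ r * (#W * B ^ 2) / ε ^ 2)
  rw [div_lt_iff₀ (by positivity)] at hT
  have hT₀ : 0 < (T : ℝ) := pos_of_mul_pos_left ((by positivity : (0 : ℝ) ≤ _).trans_lt hT)
    (sq_nonneg ε)
  refine ⟨T, fun G hG ↦ ?_⟩
  obtain ⟨i, hi, hclose⟩ := exists_forall_sum_abs_avg_condAvg_sub_le hp (W := W)
    (F := fun x _ ↦ G x) (fun x _ ↦ hG x) hs (by exact_mod_cast hT₀) hε.le hT.le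
  refine ⟨i, hi, fun x hx e he ↦ ?_⟩
  have := hclose x hx e he
  simp only [univ_unique, sum_singleton, one_mul] at this
  linarith [(abs_le.1 this).1]

lemma avg_interleaveAvg_nil (n d : ℕ) (ds : List ℕ) :
    avg n (interleaveAvg p F (d :: ds) []) = avg (n + d) F := by
  rw [avg_append]
  exact avg_congr fun c _ ↦ interleaveAvg_cons_nil d ds c

lemma avg_interleaveAvg_cons {n d g M : ℕ} (hM : n + d + p.length + g = M) {ds : List ℕ}
    {x : List Γ} (hx : x.length < ds.length) (a : Γ) :
    avg n (interleaveAvg p F (d :: ds.modifyHead (g + ·)) (a :: x)) =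
      avg (n + d) fun c ↦ condAvg M (interleaveAvg p F ds x) (c ++ plug a p) := by
  rw [avg_append]
  refine avg_congr fun c hc ↦ ?_
  rw [interleaveAvg_cons_cons]
  refine avg_congr fun z hz ↦ ?_
  rw [interleaveAvg_modifyHead g hx, condAvg]
  congr 1
  simp only [List.length_append, List.length_map]
  omega

/-- The blocks are chosen from the last one to the first: the new first pattern is inserted at a
level where, by the energy increment argument, it hardly affects the averages over the rest. -/
lemma exists_forall_sub_le_avg_interleaveAvg {H : Set ℕ} (hH : H.Infinite) (p : List (Option Γ))
    (η : ℝ) (hε : 0 < ε) (n n₀ : ℕ) :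
    ∃ B, n₀ < B ∧ ∀ F : List Γ → ℝ, (∀ c, |F c| ≤ 1) → (∀ t ∈ H, t < B → η ≤ avg t F) →
      ∃ ds : List ℕ, ds.length = n ∧
        (∀ m < n, n₀ + level p.length ds m ∈ H ∧ n₀ + level p.length ds m < B) ∧
        ∀ x : List Γ, x.length < n → η - x.length * ε ≤ avg n₀ (interleaveAvg p F ds x) := by
  induction n generalizing n₀ with
  | zero => exact ⟨n₀ + 1, n₀.lt_succ_self, fun F _ _ ↦ ⟨[], rfl, by simp, by simp⟩⟩
  | succ n ih =>
    obtain ⟨s, hsH, hs⟩ := exists_seq_mem_add_le hH n₀ p.length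
    obtain ⟨T, hT⟩ := exists_forall_avg_sub_le_avg_condAvg (Γ := Γ)
      (List.finite_length_lt Γ n).toFinset (fun i ↦ hs i _ i.lt_succ_self) 1 hε
    obtain ⟨B, hTB, hB⟩ := ih (s T)
    refine ⟨B, (hsH T).2.trans_lt hTB, fun F hF hη ↦ ?_⟩
    obtain ⟨ds, hds, hlevel, havg⟩ := hB F hF hη
    obtain ⟨i, hi, hinsert⟩ := hT (interleaveAvg p F ds) fun x ↦ abs_interleaveAvg_le hF ds x
    have hiT := hs i T hi
    obtain ⟨d, hd⟩ := Nat.exists_eq_add_of_le (hsH i).2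
    obtain ⟨g, hg⟩ := Nat.exists_eq_add_of_le hiT
    refine ⟨d :: ds.modifyHead (g + ·), by simp [hds], ?_, ?_⟩
    · rintro (_ | m) hm
      · rw [level_cons_zero, ← hd]
        exact ⟨(hsH i).1, by omega⟩
      · rw [level_cons_succ, level_modifyHead (by omega), ← add_assoc, ← hd, ← add_assoc,
          ← add_assoc, ← hg]
        exact hlevel m (by omega)
    · rintro (_ | ⟨a, x⟩) hx
      · rw [avg_interleaveAvg_nil, ← hd]
        simpa using hη _ (hsH i).1 (by omega)
      · have hx' : x.length < n := by simpa using hx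
        rw [avg_interleaveAvg_cons (M := s T) (by omega) (hds ▸ hx'), ← hd]
        have := hinsert x (by simpa using hx') (plug a p) (by simp)
        push_cast [List.length_cons]
        linarith [havg x hx']

end BlockLengths

/-! ### Lines of a given pattern -/

/-- The words of `A` which some initial segment of `s` extends to a word of length `l` in `A`. -/
def withExtension {Γ : Type} (A : Set (List Γ)) (l : ℕ) (s : List Γ) : Set (List Γ) :=
  {c | c ∈ A ∧ c ++ s.take (l - c.length) ∈ A}

/-- The Carlson–Simpson line with lowest point `c` and top level `c ++ plug a w` lies in `A`, has
pattern `p`, and its words have lengths in `S`. -/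
structure IsPatternLine {Γ : Type} (A : Set (List Γ)) (S : Set ℕ) (p : List (Option Γ))
    (c : List Γ) (w : List (Option Γ)) : Prop where
  isPrefix : p <+: w
  mem : c ∈ A
  append_mem : ∀ a, c ++ plug a w ∈ A
  length_mem : c.length ∈ S
  length_add_length_mem : c.length + w.length ∈ S

lemma IsPatternLine.mono {Γ : Type} {A : Set (List Γ)} {S T : Set ℕ} {p w : List (Option Γ)}
    {c : List Γ} (h : IsPatternLine A S p c w) (hST : S ⊆ T) : IsPatternLine A T p c w :=
  { h with
    length_mem := hST h.length_mem
    length_add_length_mem := hST h.length_add_length_mem }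

/-- The density, at length `l`, of the common extensions into `A` of the words `c ++ plug a w`. -/
noncomputable def extDensity {Γ : Type} [Fintype Γ] (A : Set (List Γ)) (c : List Γ)
    (w : List (Option Γ)) (l : ℕ) : ℝ :=
  avg (l - (c.length + w.length)) fun s ↦ 𝟙[∀ a, c ++ plug a w ++ s ∈ A]

section PatternLine

variable {Γ : Type} [Fintype Γ] {A : Set (List Γ)} {p : List (Option Γ)} {l N : ℕ} {θ δ : ℝ}

lemma CountingCS.exists_le_avg {α : Type} [Nonempty Γ] (h : CountingCS α δ N θ) (n : ℕ)
    (X : List Γ → Set (List α))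
    (hX : ∀ x : List α, x.length < N → δ ≤ avg n fun z ↦ 𝟙[x ∈ X z]) :
    ∃ w : List (Option α), none ∈ w ∧ w.length < N ∧ θ ≤ avg n fun z ↦ 𝟙[LineIn w (X z)] := by
  simp only [avg_eq_sum_inv_card_mul] at hX ⊢
  exact h (Fin n → Γ) _ (fun v ↦ X (List.ofFn v)) (isSubprob_inv_card _) hX

variable [Nonempty Γ]

lemma extWeight_eq_avg (A : Set (List Γ)) (l : ℕ) (c : List Γ) :
    extWeight A l c = avg l fun s ↦ 𝟙[c ∈ withExtension A l s] := by
  simp only [extWeight, condAvg_eq_avg_take, mul_avg, ← iverson_and]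
  rfl

lemma CountingCS.exists_le_avg_lineIn_interleave (h : CountingCS Γ δ N θ) {ds : List ℕ}
    (hA : ∀ x : List Γ, x.length < N → δ ≤ interleaveAvg p (extWeight A l) ds x []) :
    ∃ (Z : List Γ) (w : List (Option Γ)), Z.length = ds.sum ∧ none ∈ w ∧ w.length < N ∧
      θ ≤ avg l fun s ↦
        𝟙[LineIn w {x | interleave p id (ds.splitLengths Z) x ∈ withExtension A l s}] := by
  let X (Z s : List Γ) : Set (List Γ) :=
    {x | interleave p id (ds.splitLengths Z) x ∈ withExtension A l s}
  have split (E : Set (List Γ) → Prop) :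
      (avg (ds.sum + l) fun y ↦ 𝟙[E (X (y.take ds.sum) (y.drop ds.sum))]) =
        avg ds.sum fun Z ↦ avg l fun s ↦ 𝟙[E (X Z s)] := by
    rw [avg_append]
    refine avg_congr fun Z hZ ↦ ?_
    simp only [List.take_left' hZ, List.drop_left' hZ]
  obtain ⟨w, hvar, hlen, hw⟩ := h.exists_le_avg (ds.sum + l)
    (fun y ↦ X (y.take ds.sum) (y.drop ds.sum)) fun x hx ↦ by
      rw [split (x ∈ ·)]
      refine (hA x hx).trans_eq ?_
      simp only [interleaveAvg, List.nil_append, extWeight_eq_avg]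
      rfl
  rw [split (LineIn w)] at hw
  obtain ⟨Z, hZ, hZw⟩ := exists_le_of_le_avg hw
  exact ⟨Z, w, hZ, hvar, hlen, hZw⟩

lemma exists_isPatternLine_of_le_avg {zs : List (List Γ)} {w₀ : List (Option Γ)}
    (hvar : none ∈ w₀) (hlen : w₀.length < zs.length) {S : Set ℕ}
    (hS : ∀ m < zs.length, level p.length (zs.map List.length) m ∈ S) (hθ : 0 < θ)
    (h : θ ≤ avg l fun s ↦ 𝟙[LineIn w₀ {x | interleave p id zs x ∈ withExtension A l s}]) :
    ∃ c w, IsPatternLine A S p c w ∧ θ ≤ extDensity A c w l := by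
  obtain ⟨w, hpw, hw⟩ := exists_prefix_interleave_plug (p := p) hvar hlen.le
  set c := interleave p id zs (stem w₀)
  have length_mem (x : List Γ) (hx : x.length < zs.length) :
      (interleave p id zs x).length ∈ S := length_interleave (p := p) id hx ▸ hS _ hx
  have length_plug (a : Γ) : (c ++ plug a w).length = c.length + w.length := by simp
  obtain ⟨s, -, hs⟩ := exists_le_of_le_avg h
  have line := of_iverson_pos (hθ.trans_le hs)
  obtain ⟨b⟩ := ‹Nonempty Γ›
  refine ⟨c, w, ⟨hpw, line.1.1, fun a ↦ hw a ▸ (line.2 a).1,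
    length_mem _ ((length_stem_lt hvar).trans hlen), ?_⟩, ?_⟩
  · rw [← length_plug b, ← hw b]
    exact length_mem _ (by simpa using hlen)
  · rw [extDensity, ← avg_take_of_le (Nat.sub_le l (c.length + w.length))]
    refine h.trans (avg_mono fun s _ ↦ iverson_mono fun hline a ↦ ?_)
    have := (hline.2 a).2
    rwa [hw, length_plug] at this

lemma CountingCS.exists_isPatternLine {η : ℝ} (h : CountingCS Γ δ N θ) (hθ : 0 < θ) (hη : δ < η)
    {H : Set ℕ} (hH : H.Infinite) (p : List (Option Γ)) :
    ∃ B, ∀ (A : Set (List Γ)) (l : ℕ), (∀ t ∈ H, t < B → η ≤ avg t (extWeight A l)) →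
      ∃ c w, IsPatternLine A (H ∩ Set.Iio B) p c w ∧ θ ≤ extDensity A c w l := by
  have hε : 0 < (η - δ) / (N + 1) := div_pos (sub_pos.2 hη) (by positivity)
  obtain ⟨B, -, hB⟩ := exists_forall_sub_le_avg_interleaveAvg hH p η hε N 0
  refine ⟨B, fun A l hA ↦ ?_⟩
  obtain ⟨ds, hds, hlevel, havg⟩ := hB _ (abs_extWeight_le_one A l) hA
  obtain ⟨Z, w₀, hZ, hvar, hlen, hw₀⟩ := h.exists_le_avg_lineIn_interleave fun x hx ↦ by
    have hxN : x.length * ((η - δ) / (N + 1)) ≤ η - δ := by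
      rw [mul_div_assoc', div_le_iff₀ (by positivity), mul_comm]
      have : (x.length : ℝ) ≤ N := by exact_mod_cast hx.le
      exact mul_le_mul_of_nonneg_left (by linarith) (sub_pos.2 hη).le
    have := havg x hx
    rw [avg_zero] at this
    linarith
  have hzs : (ds.splitLengths Z).length = N := by simp [hds]
  refine exists_isPatternLine_of_le_avg hvar (hzs ▸ hlen) (fun m hm ↦ ?_) hθ hw₀
  rw [List.map_splitLengths_length _ _ hZ.ge]
  simpa using hlevel m (hzs ▸ hm)

lemma CountingCS.exists_isPatternLine_forall_eventually {η : ℝ} (h : CountingCS Γ δ N θ)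
    (hθ : 0 < θ) (hη : δ < η) {U : Ultrafilter ℕ} (hU : (U : Filter ℕ) ≤ Filter.cofinite)
    {H : Set ℕ} (hH : H.Infinite) (hA : ∀ t ∈ H, ∀ᶠ l in U, η ≤ avg t (extWeight A l))
    (p : List (Option Γ)) :
    ∃ c w B, IsPatternLine A (H ∩ Set.Iio B) p c w ∧
      ∀ᶠ l in U, B ≤ l ∧ θ ≤ extDensity A c w l := by
  obtain ⟨B, hB⟩ := h.exists_isPatternLine hθ hη hH p
  have correlated : ∀ᶠ l in U, ∀ t ∈ H ∩ Set.Iio B, η ≤ avg t (extWeight A l) :=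
    (Filter.eventually_all_finite ((Set.finite_Iio B).subset Set.inter_subset_right)).2
      fun t ht ↦ hA t ht.1
  have bounded : ({c | c.length < B} ×ˢ {w | w.length < B} :
      Set (List Γ × List (Option Γ))).Finite :=
    (List.finite_length_lt _ B).prod (List.finite_length_lt _ B)
  -- Only finitely many lines are available, so the ultrafilter singles out one of them.
  obtain ⟨⟨c, w⟩, -, hcw⟩ := (Ultrafilter.eventually_exists_mem_iff bounded
    (P := fun cw l ↦ IsPatternLine A (H ∩ Set.Iio B) p cw.1 cw.2 ∧
      θ ≤ extDensity A cw.1 cw.2 l)).1 <| correlated.mono fun l hl ↦ by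
    obtain ⟨c, w, hline, hext⟩ := hB A l fun t ht htB ↦ hl t ⟨ht, htB⟩
    exact ⟨(c, w), ⟨hline.length_mem.2, (Nat.le_add_left _ _).trans_lt
      hline.length_add_length_mem.2⟩, hline, hext⟩
  have hBU : ∀ᶠ l in U, B ≤ l := hU (Nat.cofinite_eq_atTop ▸ Filter.eventually_ge_atTop B)
  obtain ⟨-, hline, -⟩ := hcw.exists
  exact ⟨c, w, B, hline, hBU.and (hcw.mono fun l ↦ And.right)⟩

theorem exists_isPatternLine_forall_le_extDensity (Γ : Type) [Fintype Γ] [Nonempty Γ]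
    (hδ : 0 < δ) : ∃ θ : ℝ, 0 < θ ∧ ∀ L : Set ℕ, L.Infinite → ∀ A : Set (List Γ),
      (∀ l ∈ L, δ ≤ avg l fun z ↦ 𝟙[z ∈ A]) → ∀ p : List (Option Γ),
        ∃ c w B, IsPatternLine A (L ∩ Set.Iio B) p c w ∧
          {l ∈ L | B ≤ l ∧ θ ≤ extDensity A c w l}.Infinite := by
  obtain ⟨N, θ, hθ, hcount⟩ :=
    (densityCS Γ (δ ^ 2 / 8) (by positivity)).exists_countingCS (by positivity)
  refine ⟨θ, hθ, fun L hL A hA p ↦ ?_⟩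
  have := hL.cofinite_inf_principal_neBot
  set U := Ultrafilter.of (Filter.cofinite ⊓ Filter.principal L)
  have hU : (U : Filter ℕ) ≤ Filter.cofinite := (Ultrafilter.of_le _).trans inf_le_left
  have hLU : L ∈ U :=
    ((Ultrafilter.of_le _).trans inf_le_right : (U : Filter ℕ) ≤ _) (Filter.mem_principal_self L)
  obtain ⟨c, w, B, hline, hext⟩ := hcount.exists_isPatternLine_forall_eventually hθ
    (by linarith [pow_pos hδ 2] : 2 * (δ ^ 2 / 8) < δ ^ 2 / 2) hU
    (infinite_setOf_eventually_le_avg_extWeight hδ hA hU hLU) (fun t ht ↦ ht.2) p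
  refine ⟨c, w, B, hline.mono (Set.inter_subset_inter_left _ (Set.sep_subset _ _)), fun hfin ↦ ?_⟩
  obtain ⟨l, ⟨hlL, hl⟩, hl'⟩ :=
    ((Filter.Eventually.and hLU hext).and (hU hfin.compl_mem_cofinite)).exists
  exact hl' ⟨hlL, hl⟩

end PatternLine

lemma dens_eq_avg (k n : ℕ) (A : Set (Word k)) : dens k n A = avg n fun z ↦ 𝟙[z ∈ A] := by
  classical
  have image : {x ∈ A | x.length = n} =
      List.ofFn '' (({v | List.ofFn v ∈ A} : Finset (Fin n → Fin k)) : Set (Fin n → Fin k)) := by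
    ext x
    constructor
    · rintro ⟨hx, rfl⟩
      exact ⟨x.get, by simpa using hx, List.ofFn_get x⟩
    · rintro ⟨v, hv, rfl⟩
      exact ⟨by simpa using hv, by simp⟩
  rw [_root_.dens, image, Set.ncard_image_of_injective _ List.ofFn_injective, Set.ncard_coe_finset,
    avg, Fintype.expect_eq_sum_div_card]
  simp [iverson]

end CarlsonSimpson

/-- Corollary 11.12: for `k` and `δ` there is `θ > 0` such that for every infinite set
`L` of levels on which `A` is `δ`-dense and every variable word `p`, there are a word
`c`, a variable word `w` of pattern `p` (i.e. with `p <+: w`) and an infinite `L' ⊆ L`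
such that the Carlson–Simpson line `V = {c} ∪ {c ⌢ w(a) : a ∈ [k]}` lies in
`⋃_{ℓ ∈ L₀} A ∩ [k]^ℓ` where `L₀ = {ℓ ∈ L : ℓ < min L'}`, and such that for every
`ℓ ∈ L'` the common extensions of the top level `V(1)` into `A` have density at least
`θ` in `[k]^{ℓ - ℓ₁}`, where `ℓ₁ = |c| + |w|` is the unique integer with
`V(1) ⊆ [k]^{ℓ₁}`. -/
theorem infinite_pattern_dichotomy (k : ℕ) (hk : 2 ≤ k) (δ : ℝ)
    (hδ0 : 0 < δ) (hδ1 : δ ≤ 1) :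
    ∃ θ : ℝ, 0 < θ ∧
      ∀ L : Set ℕ, L.Infinite → ∀ A : Set (Word k), (∀ ℓ ∈ L, δ ≤ dens k ℓ A) →
        ∀ p : VWord k, IsVar p →
          ∃ (c : Word k) (w : VWord k) (L' : Set ℕ),
            IsVar w ∧ p <+: w ∧ L' ⊆ L ∧ L'.Infinite ∧
            (insert c {x | ∃ a : Fin k, x = c ++ subst w a} ⊆
              {x ∈ A | x.length ∈ L ∧ x.length < sInf L'}) ∧
            ∀ ℓ ∈ L', θ ≤ dens k (ℓ - (c.length + w.length))
              {s | ∀ a : Fin k, c ++ subst w a ++ s ∈ A} := by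
  have : Nonempty (Fin k) := ⟨⟨0, by omega⟩⟩
  obtain ⟨θ, hθ, h⟩ := CarlsonSimpson.exists_isPatternLine_forall_le_extDensity (Fin k) hδ0
  refine ⟨θ, hθ, fun L hL A hA p hp ↦ ?_⟩
  obtain ⟨c, w, B, hline, hinf⟩ :=
    h L hL A (fun l hl ↦ CarlsonSimpson.dens_eq_avg k l A ▸ hA l hl) p
  have hB : B ≤ sInf {l ∈ L | B ≤ l ∧ θ ≤ CarlsonSimpson.extDensity A c w l} :=
    (Nat.sInf_mem hinf.nonempty).2.1
  refine ⟨c, w, _, hline.isPrefix.subset hp, hline.isPrefix, Set.sep_subset _ _, hinf, ?_,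
    fun l hl ↦ CarlsonSimpson.dens_eq_avg k _ _ ▸ hl.2.2⟩
  rintro x (rfl | ⟨a, rfl⟩)
  · exact ⟨hline.mem, hline.length_mem.1, hline.length_mem.2.trans_le hB⟩
  · have hlen : (c ++ subst w a).length = c.length + w.length := by simp [subst]
    exact ⟨hline.append_mem a, hlen ▸ hline.length_add_length_mem.1,
      hlen ▸ hline.length_add_length_mem.2.trans_le hB⟩
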